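/- arXiv:1501.04744 — 4 statements merged into one kernel-verified Lean document; each statement's English description precedes it below -/
import Mathlib

section
/- Let b be a positive integer and let ℤ[ω] = ℤ[X]/(X²+X+1) be the ring of Eisenstein integers, with ω the class of X. In the quotient ring ℤ[ω]/(−b+bω), the additive order of the residue class of 1 is 3b and the additive order of the residue class of 2+ω is b. -/
open Polynomial

/-- The ring of Eisenstein integers ℤ[ω] = ℤ[X]/(X²+X+1). -/
abbrev Eisenstein : Type := AdjoinRoot ((X : ℤ[X]) ^ 2 + X + 1)

/-- ω, the class of X in ℤ[X]/(X²+X+1). -/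
noncomputable abbrev eisensteinOmega : Eisenstein := AdjoinRoot.root _

theorem eis_sq : eisensteinOmega ^ 2 = -1 - eisensteinOmega := by
  have h : AdjoinRoot.mk ((X : ℤ[X]) ^ 2 + X + 1) (X ^ 2 + X + 1) = 0 := AdjoinRoot.mk_self
  rw [map_add, map_add, map_pow, AdjoinRoot.mk_X, map_one] at h
  linear_combination h

theorem eis_rep (z : Eisenstein) : ∃ x y : ℤ, z = x + y * eisensteinOmega := by
  induction z using AdjoinRoot.induction_on with
  | ih p =>
    induction p using Polynomial.induction_on with
    | C a => exact ⟨a, 0, by simp⟩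
    | add p q hp hq =>
      obtain ⟨x, y, h⟩ := hp
      obtain ⟨u, v, h'⟩ := hq
      refine ⟨x + u, y + v, ?_⟩
      rw [map_add, h, h']
      push_cast
      ring
    | monomial n a h =>
      obtain ⟨x, y, h⟩ := h
      refine ⟨-y, x - y, ?_⟩
      rw [pow_succ X n, ← mul_assoc, map_mul, h, AdjoinRoot.mk_X]
      push_cast
      linear_combination (y : Eisenstein) * eis_sq

theorem eis_zero (x y : ℤ) (h : (x : Eisenstein) + y * eisensteinOmega = 0) : x = 0 ∧ y = 0 := by
  have hm : ((X : ℤ[X]) ^ 2 + X + 1).Monic := by monicity!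
  have hd : ((X : ℤ[X]) ^ 2 + X + 1).degree = 2 := by compute_degree!
  have h1 : AdjoinRoot.mk ((X : ℤ[X]) ^ 2 + X + 1) (C y * X + C x) = 0 := by
    rw [map_add, map_mul, AdjoinRoot.mk_X, ← h]
    simp [add_comm]
  rw [AdjoinRoot.mk_eq_zero] at h1
  have h2 : C y * X + C x = 0 := by
    by_contra hne
    refine hm.not_dvd_of_degree_lt hne ?_ h1
    rw [hd]
    exact lt_of_le_of_lt degree_linear_le (by norm_num)
  have c0 := congrArg (fun p : ℤ[X] => p.coeff 0) h2
  have c1 := congrArg (fun p : ℤ[X] => p.coeff 1) h2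
  simp only [coeff_add, coeff_C_mul, coeff_X, coeff_C, coeff_zero] at c0 c1
  norm_num at c0 c1
  exact ⟨c0, c1⟩

theorem eis_mem (b : ℕ) (u v : ℤ) :
    (u : Eisenstein) + v * eisensteinOmega ∈
      Ideal.span {-(b : Eisenstein) + b * eisensteinOmega} ↔
    ∃ x y : ℤ, u = b * (-x - y) ∧ v = b * (x - 2 * y) := by
  rw [Ideal.mem_span_singleton]
  constructor
  · rintro ⟨z, hz⟩
    obtain ⟨x, y, rfl⟩ := eis_rep z
    refine ⟨x, y, ?_⟩
    have := eis_zero (u - b * (-x - y)) (v - b * (x - 2 * y)) (by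
      push_cast
      linear_combination hz + (b * y : Eisenstein) * eis_sq)
    exact ⟨by linarith [this.1], by linarith [this.2]⟩
  · rintro ⟨x, y, rfl, rfl⟩
    refine ⟨x + y * eisensteinOmega, ?_⟩
    push_cast
    linear_combination -(b * y : Eisenstein) * eis_sq

theorem eis_smul (b : ℕ) (u v : ℤ) (k : ℕ) :
    k • (Ideal.Quotient.mk (Ideal.span {-(b : Eisenstein) + b * eisensteinOmega})
      (u + v * eisensteinOmega)) = 0 ↔
    ∃ x y : ℤ, k * u = b * (-x - y) ∧ k * v = b * (x - 2 * y) := by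
  rw [← eis_mem, ← map_nsmul, Ideal.Quotient.eq_zero_iff_mem]
  have : k • ((u : Eisenstein) + v * eisensteinOmega) =
      ((k * u : ℤ) : Eisenstein) + ((k * v : ℤ) : Eisenstein) * eisensteinOmega := by
    rw [nsmul_eq_mul]
    push_cast
    ring
  rw [this]

theorem stmt_4 (b : ℕ) (hb : 0 < b) :
    addOrderOf (Ideal.Quotient.mk
      (Ideal.span {-(b : Eisenstein) + b * eisensteinOmega}) 1) = 3 * b ∧
    addOrderOf (Ideal.Quotient.mk
      (Ideal.span {-(b : Eisenstein) + b * eisensteinOmega})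
      (2 + eisensteinOmega)) = b := by
  have e1 : (1 : Eisenstein) = ((1 : ℤ) : Eisenstein) + ((0 : ℤ) : Eisenstein) * eisensteinOmega := by
    simp
  have e2 : (2 + eisensteinOmega : Eisenstein) =
      ((2 : ℤ) : Eisenstein) + ((1 : ℤ) : Eisenstein) * eisensteinOmega := by
    simp
  have hb' : (b : ℤ) ≠ 0 := by exact_mod_cast hb.ne'
  constructor
  · rw [e1]
    apply Nat.dvd_antisymm
    · rw [addOrderOf_dvd_iff_nsmul_eq_zero, eis_smul]
      exact ⟨-2, -1, by push_cast; ring, by ring⟩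
    · obtain ⟨x, y, h1, h2⟩ := (eis_smul b 1 0 _).1 (addOrderOf_nsmul_eq_zero _)
      rw [mul_zero, eq_comm, mul_eq_zero] at h2
      have hx : x = 2 * y := by
        rcases h2 with h | h
        · exact absurd h hb'
        · linarith
      subst hx
      rw [← Int.natCast_dvd_natCast]
      exact ⟨-y, by rw [Nat.cast_mul, Nat.cast_ofNat]; linear_combination h1⟩
  · rw [e2]
    apply Nat.dvd_antisymm
    · rw [addOrderOf_dvd_iff_nsmul_eq_zero, eis_smul]
      exact ⟨-1, -1, by ring, by ring⟩
    · obtain ⟨x, y, h1, h2⟩ := (eis_smul b 2 1 _).1 (addOrderOf_nsmul_eq_zero _)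
      rw [← Int.natCast_dvd_natCast]
      exact ⟨x - 2 * y, by linear_combination h2⟩
end

section
/- Let H be the group with presentation ⟨A, B, C | A² = B³ = C⁷ = ABC = (B²CB²C⁴BC⁴)² = 1⟩. Then H has order 504. -/
/-- Relators of the quotient ⟨A, B, C | A² = B³ = C⁷ = ABC = S^k = 1⟩ of the
(2,3,7) triangle group, where S = B²CB²C⁴BC⁴ and the generators
A, B, C are represented by `FreeGroup.of 0`, `FreeGroup.of 1`, `FreeGroup.of 2`. -/
def hurwitzRels (k : ℕ) : Set (FreeGroup (Fin 3)) :=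
  {FreeGroup.of 0 ^ 2, FreeGroup.of 1 ^ 3, FreeGroup.of 2 ^ 7,
   FreeGroup.of 0 * FreeGroup.of 1 * FreeGroup.of 2,
   (FreeGroup.of 1 ^ 2 * FreeGroup.of 2 * FreeGroup.of 1 ^ 2 *
     FreeGroup.of 2 ^ 4 * FreeGroup.of 1 * FreeGroup.of 2 ^ 4) ^ k}

namespace HurwitzTC

/-- A letter: first component selects the generator (`true` is `B`, `false` is `C`),
second component the sign. -/
abbrev Letter := Bool × Bool

abbrev lb : Letter := (true, true)
abbrev lB : Letter := (true, false)
abbrev lc : Letter := (false, true)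
abbrev lC : Letter := (false, false)

section Eval
variable {G : Type*} [Group G]

/-- Value of a letter in a group with chosen elements `b`, `c`. -/
def ev1 (b c : G) : Letter → G
  | (true, true) => b
  | (true, false) => b⁻¹
  | (false, true) => c
  | (false, false) => c⁻¹

/-- Value of a word. -/
def ev (b c : G) : List Letter → G
  | [] => 1
  | l :: w => ev1 b c l * ev b c w

theorem ev_append (b c : G) (u v : List Letter) :
    ev b c (u ++ v) = ev b c u * ev b c v := by
  induction u with
  | nil => simp [ev]
  | cons l u ih => simp [ev, ih, mul_assoc]

/-- Formal inverse of a letter. -/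
def linv (l : Letter) : Letter := (l.1, !l.2)

theorem ev1_linv (b c : G) (l : Letter) : ev1 b c (linv l) = (ev1 b c l)⁻¹ := by
  rcases l with ⟨_ | _, _ | _⟩ <;> simp [ev1, linv]

/-- Formal inverse of a word. -/
def winv : List Letter → List Letter
  | [] => []
  | l :: w => winv w ++ [linv l]

theorem ev_winv (b c : G) (w : List Letter) : ev b c (winv w) = (ev b c w)⁻¹ := by
  induction w with
  | nil => simp [ev, winv]
  | cons l w ih => simp [ev, winv, ev_append, ih, ev1_linv]

end Eval

/-- Partial coset table: known images under `B` and under `C`. -/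
structure State where
  tb : List (ℕ × ℕ)
  tc : List (ℕ × ℕ)

def fwd : List (ℕ × ℕ) → ℕ → Option ℕ
  | [], _ => none
  | (x, y) :: t, i => bif x == i then some y else fwd t i

def bwd : List (ℕ × ℕ) → ℕ → Option ℕ
  | [], _ => none
  | (x, y) :: t, i => bif y == i then some x else bwd t i

def look (s : State) : Letter → ℕ → Option ℕ
  | (true, true), i => fwd s.tb i
  | (true, false), i => bwd s.tb i
  | (false, true), i => fwd s.tc i
  | (false, false), i => bwd s.tc i

def trace (s : State) : List Letter → ℕ → Option ℕ
  | [], i => some i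
  | l :: w, i => match trace s w i with
    | none => none
    | some j => look s l j

def addFact (s : State) : Letter → ℕ → ℕ → State
  | (true, true), i, j => ⟨(i, j) :: s.tb, s.tc⟩
  | (true, false), i, j => ⟨(j, i) :: s.tb, s.tc⟩
  | (false, true), i, j => ⟨s.tb, (i, j) :: s.tc⟩
  | (false, false), i, j => ⟨s.tb, (j, i) :: s.tc⟩

/-- Steps of the coset enumeration: `new l i n` defines coset `n` as `l` applied to coset `i`;
`ded r k i` solves relator `r` for its `k`-th letter and applies it at coset `i`. -/
inductive Step where
  | new (l : Letter) (i n : ℕ)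
  | ded (r k i : ℕ)

def sWord : List Letter := [lB, lc, lB, lC, lC, lC, lb, lC, lC, lC]

def relWord : ℕ → List Letter
  | 0 => [lb, lb, lb]
  | 1 => [lc, lc, lc, lc, lc, lc, lc]
  | 2 => [lb, lc, lb, lc]
  | 3 => sWord ++ sWord
  | _ => []

def doStep (W : List (List Letter)) (s : State) : Step → Option State
  | .new l i n => if W.getD n [] = l :: W.getD i [] then some (addFact s l i n) else none
  | .ded r k i => match (relWord r).drop k with
    | [] => none
    | l :: t => match trace s (winv (t ++ (relWord r).take k)) i with
      | none => none
      | some j => some (addFact s l i j)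

def doSteps (W : List (List Letter)) : List Step → State → Option State
  | [], s => some s
  | x :: xs, s => match doStep W s x with
    | none => none
    | some s' => doSteps W xs s'

section Sound
variable {G X : Type*} [Group G] [MulAction G X]

def Inv (b c : G) (p : ℕ → X) (s : State) : Prop :=
  (∀ e ∈ s.tb, b • p e.1 = p e.2) ∧ (∀ e ∈ s.tc, c • p e.1 = p e.2)

theorem fwd_mem {t : List (ℕ × ℕ)} {i j : ℕ} (h : fwd t i = some j) : (i, j) ∈ t := by
  induction t with
  | nil => simp [fwd] at h
  | cons e t ih =>
    rcases e with ⟨x, y⟩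
    by_cases hx : x = i
    · simp [fwd, hx] at h; simp [hx, h]
    · have : (x == i) = false := by simpa using hx
      simp only [fwd, this, cond_false] at h
      exact List.mem_cons_of_mem _ (ih h)

theorem bwd_mem {t : List (ℕ × ℕ)} {i j : ℕ} (h : bwd t i = some j) : (j, i) ∈ t := by
  induction t with
  | nil => simp [bwd] at h
  | cons e t ih =>
    rcases e with ⟨x, y⟩
    by_cases hx : y = i
    · simp [bwd, hx] at h; simp [hx, h]
    · have : (y == i) = false := by simpa using hx
      simp only [bwd, this, cond_false] at h
      exact List.mem_cons_of_mem _ (ih h)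

variable {b c : G} {p : ℕ → X} {s : State}

theorem look_sound (hs : Inv b c p s) {l : Letter} {i j : ℕ} (h : look s l i = some j) :
    ev1 b c l • p i = p j := by
  rcases l with ⟨_ | _, _ | _⟩ <;> simp only [look] at h <;> simp only [ev1]
  · exact inv_smul_eq_iff.2 (hs.2 _ (bwd_mem h)).symm
  · exact hs.2 _ (fwd_mem h)
  · exact inv_smul_eq_iff.2 (hs.1 _ (bwd_mem h)).symm
  · exact hs.1 _ (fwd_mem h)

theorem trace_sound (hs : Inv b c p s) (w : List Letter) :
    ∀ {i j : ℕ}, trace s w i = some j → ev b c w • p i = p j := by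
  induction w with
  | nil => intro i j h; simp only [trace, Option.some.injEq] at h; simp [ev, h]
  | cons l w ih =>
    intro i j h
    simp only [trace] at h
    split at h
    · simp at h
    · next k hk => rw [ev, mul_smul, ih hk, look_sound hs h]

theorem addFact_sound (hs : Inv b c p s) {l : Letter} {i j : ℕ}
    (h : ev1 b c l • p i = p j) : Inv b c p (addFact s l i j) := by
  rcases l with ⟨_ | _, _ | _⟩ <;> simp only [ev1] at h
  · refine ⟨hs.1, fun e he => ?_⟩
    rcases List.mem_cons.1 he with rfl | he
    · exact (inv_smul_eq_iff.1 h).symm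
    · exact hs.2 _ he
  · refine ⟨hs.1, fun e he => ?_⟩
    rcases List.mem_cons.1 he with rfl | he
    · exact h
    · exact hs.2 _ he
  · refine ⟨fun e he => ?_, hs.2⟩
    rcases List.mem_cons.1 he with rfl | he
    · exact (inv_smul_eq_iff.1 h).symm
    · exact hs.1 _ he
  · refine ⟨fun e he => ?_, hs.2⟩
    rcases List.mem_cons.1 he with rfl | he
    · exact h
    · exact hs.1 _ he

theorem doStep_sound (hrel : ∀ r, ev b c (relWord r) = 1) (W : List (List Letter)) (x0 : X)
    (hp : ∀ n, p n = ev b c (W.getD n []) • x0) (hs : Inv b c p s) (x : Step) {s' : State}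
    (h : doStep W s x = some s') : Inv b c p s' := by
  cases x with
  | new l i n =>
    simp only [doStep] at h
    split at h
    · next hw =>
      simp only [Option.some.injEq] at h
      subst h
      apply addFact_sound hs
      rw [hp n, hw, hp i, ev, mul_smul]
    · simp at h
  | ded r k i =>
    simp only [doStep] at h
    split at h
    · simp at h
    · next l t hd =>
      split at h
      · simp at h
      · next j hj =>
        simp only [Option.some.injEq] at h
        subst h
        apply addFact_sound hs
        rw [← trace_sound hs _ hj, ev_winv, ev_append]
        congr 1
        have h1 := hrel r
        rw [← List.take_append_drop k (relWord r), hd, ev_append, ev] at h1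
        rw [eq_inv_iff_mul_eq_one]
        have h2 := eq_inv_of_mul_eq_one_right h1
        rw [← mul_assoc, h2]
        simp

theorem doSteps_sound (hrel : ∀ r, ev b c (relWord r) = 1) (W : List (List Letter)) (x0 : X)
    (hp : ∀ n, p n = ev b c (W.getD n []) • x0) (xs : List Step) :
    ∀ {s s' : State}, Inv b c p s → doSteps W xs s = some s' → Inv b c p s' := by
  induction xs with
  | nil => intro s s' hs h; simp only [doSteps, Option.some.injEq] at h; exact h ▸ hs
  | cons x xs ih =>
    intro s s' hs h
    simp only [doSteps] at h
    split at h
    · simp at h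
    · next s1 h1 => exact ih (doStep_sound hrel W x0 hp hs x h1) h

end Sound

/-- The coset enumeration of `⟨C⟩` in the group. -/
def steps : List Step :=
  [
   .new lb 0 1, .new lB 0 2, .ded 0 0 1, .ded 2 1 1, .new lC 1 3, .new lc 2 4, .ded 2 0 4, .new
   lb 3 5, .ded 0 0 5, .new lC 3 6, .new lc 4 7, .new lc 5 8, .ded 2 0 8, .new lC 5 9, .ded 2 0
   7, .new lb 6 10, .ded 0 0 10, .new lC 6 11, .ded 1 0 7, .new lB 7 12, .ded 0 0 9, .new lc 8
   13, .new lC 9 14, .new lc 10 15, .ded 2 0 15, .new lC 10 16, .ded 2 0 13, .new lb 11 17, .ded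
   0 0 17, .ded 2 1 17, .new lc 12 18, .ded 2 0 18, .new lB 13 19, .ded 0 0 16, .new lc 13 20,
   .new lb 14 21, .ded 0 0 21, .new lC 14 22, .ded 1 0 20, .new lc 15 23, .new lC 16 24, .new lC
   17 25, .ded 2 0 23, .new lc 18 26, .new lc 19 27, .ded 2 0 27, .new lC 19 28, .ded 2 0 20,
   .new lB 20 29, .ded 0 0 28, .new lc 21 30, .ded 2 0 30, .new lC 21 31, .ded 2 0 26, .new lb
   22 32, .ded 0 0 32, .ded 2 1 32, .new lB 23 33, .ded 0 0 25, .new lc 23 34, .new lb 24 35,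
   .ded 0 0 35, .new lC 24 36, .ded 1 0 34, .new lC 25 37, .new lB 26 38, .ded 0 0 31, .new lc
   26 39, .ded 1 0 39, .new lc 27 40, .new lC 28 41, .new lc 29 42, .ded 2 0 42, .new lc 30 43,
   .new lC 31 44, .new lC 32 45, .ded 2 0 43, .new lc 33 46, .ded 2 0 46, .ded 3 4 45, .new lC
   33 47, .ded 1 0 42, .ded 2 0 34, .new lB 34 48, .ded 0 0 47, .new lc 35 49, .ded 2 0 49, .new
   lC 35 50, .ded 2 0 40, .new lb 36 51, .ded 0 0 51, .ded 2 1 51, .new lb 37 52, .ded 0 0 52,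
   .new lc 38 53, .ded 2 0 53, .new lC 38 54, .ded 2 0 39, .ded 3 1 49, .new lB 39 55, .ded 0 0
   54, .ded 2 1 52, .ded 2 1 55, .new lB 40 56, .ded 0 0 50, .new lc 40 57, .new lb 41 58, .ded
   0 0 58, .ded 2 1 48, .new lC 41 59, .ded 1 0 57, .new lB 43 60, .ded 0 0 45, .ded 2 1 60,
   .new lc 43 61, .ded 3 6 59, .new lb 44 62, .ded 0 0 62, .new lC 44 63, .ded 1 0 61, .ded 2 0
   63, .new lC 50 64, .ded 1 0 53, .new lc 56 65, .ded 2 0 65, .new lC 56 66, .ded 2 0 57, .ded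
   3 1 62, .ded 3 2 63, .new lc 58 67, .ded 1 0 67, .ded 2 0 61, .ded 2 0 67, .new lC 62 68,
   .ded 2 0 64, .ded 3 6 68, .new lc 65 69, .new lC 68 70, .ded 1 0 69, .ded 2 0 69, .new lB 69
   71, .ded 0 0 70, .ded 2 1 71
  ]

/-- Coset representatives, read off from the definitions. -/
def wordsOf : List Step → List (List Letter) → List (List Letter)
  | [], W => W
  | .new l i _ :: xs, W => wordsOf xs (W ++ [l :: W.getD i []])
  | .ded _ _ _ :: xs, W => wordsOf xs W

def reps : List (List Letter) := wordsOf steps [[]]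

def lookOk (s : State) (l : Letter) (i : ℕ) : Bool :=
  match look s l i with
  | none => false
  | some j => Nat.blt j 72

def complete (s : State) : Bool :=
  (List.range 72).all fun i =>
    lookOk s lb i && lookOk s lB i && lookOk s lc i && lookOk s lC i

def finalOk : Option State → Bool
  | none => false
  | some s => complete s

theorem steps_ok : finalOk (doSteps reps steps ⟨[], [(0, 0)]⟩) = true := by
  decide +kernel

section Upper
variable {G X : Type*} [Group G] [MulAction G X]

theorem closed_of_rels {b c : G} (hrel : ∀ r, ev b c (relWord r) = 1) (x0 : X)
    (hx : c • x0 = x0) :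
    ∃ p : ℕ → X, p 0 = x0 ∧ ∀ l : Letter, ∀ i < 72, ∃ j < 72, ev1 b c l • p i = p j := by
  have h0 : reps.getD 0 [] = [] := by decide +kernel
  refine ⟨fun n => ev b c (reps.getD n []) • x0, by simp only [h0, ev, one_smul], ?_⟩
  have hok := steps_ok
  rcases hS : doSteps reps steps ⟨[], [(0, 0)]⟩ with _ | s
  · rw [hS] at hok; simp [finalOk] at hok
  rw [hS] at hok
  have hI : Inv b c (fun n => ev b c (reps.getD n []) • x0) s := by
    refine doSteps_sound hrel reps x0 (fun _ => rfl) steps ?_ hS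
    refine ⟨by simp, fun e he => ?_⟩
    rw [List.mem_singleton] at he
    subst he
    simp only [h0, ev, one_smul, hx]
  intro l i hi
  have hl : lookOk s l i = true := by
    simp only [finalOk, complete, List.all_eq_true, List.mem_range, Bool.and_eq_true] at hok
    obtain ⟨⟨⟨h1, h2⟩, h3⟩, h4⟩ := hok i hi
    rcases l with ⟨_ | _, _ | _⟩ <;> assumption
  unfold lookOk at hl
  split at hl
  · simp at hl
  · next j hj => exact ⟨j, by simpa using hl, look_sound hI hj⟩

end Upper

abbrev H := PresentedGroup (hurwitzRels 2)

def hA : H := PresentedGroup.of 0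
def hB : H := PresentedGroup.of 1
def hC : H := PresentedGroup.of 2

theorem mk_rel {w : FreeGroup (Fin 3)} (h : w ∈ hurwitzRels 2) :
    PresentedGroup.mk (hurwitzRels 2) w = 1 :=
  PresentedGroup.one_of_mem h

theorem hA2 : hA ^ 2 = 1 := by
  have := mk_rel (w := FreeGroup.of 0 ^ 2) (by simp [hurwitzRels])
  simp only [map_pow] at this
  exact this

theorem hB3 : hB ^ 3 = 1 := by
  have := mk_rel (w := FreeGroup.of 1 ^ 3) (by simp [hurwitzRels])
  simp only [map_pow] at this
  exact this

theorem hC7 : hC ^ 7 = 1 := by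
  have := mk_rel (w := FreeGroup.of 2 ^ 7) (by simp [hurwitzRels])
  simp only [map_pow] at this
  exact this

theorem hABC : hA * hB * hC = 1 := by
  have := mk_rel (w := FreeGroup.of 0 * FreeGroup.of 1 * FreeGroup.of 2)
    (by simp [hurwitzRels])
  simp only [map_mul] at this
  exact this

theorem hS2 : (hB ^ 2 * hC * hB ^ 2 * hC ^ 4 * hB * hC ^ 4) ^ 2 = 1 := by
  have := mk_rel (w := (FreeGroup.of 1 ^ 2 * FreeGroup.of 2 * FreeGroup.of 1 ^ 2 *
     FreeGroup.of 2 ^ 4 * FreeGroup.of 1 * FreeGroup.of 2 ^ 4) ^ 2) (by simp [hurwitzRels])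
  simp only [map_mul, map_pow] at this
  exact this

theorem hA_eq : hA = (hB * hC)⁻¹ := by
  rw [eq_inv_iff_mul_eq_one, ← mul_assoc, hABC]

theorem hA_eq' : hA = hB * hC := by
  have h := hA2
  rw [pow_two] at h
  rw [eq_inv_of_mul_eq_one_left h, hA_eq, inv_inv]

theorem rels_hold : ∀ r, ev hB hC (relWord r) = 1 := by
  intro r
  match r with
  | 0 => simpa [relWord, ev, ev1, pow_succ, mul_assoc] using hB3
  | 1 => simpa [relWord, ev, ev1, pow_succ, mul_assoc] using hC7
  | 2 =>
    have h := hA2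
    rw [hA_eq'] at h
    simpa [relWord, ev, ev1, pow_succ, mul_assoc] using h
  | 3 =>
    have h := hS2
    have e1 : hB ^ 2 = hB⁻¹ := eq_inv_of_mul_eq_one_left (by rw [← pow_succ, hB3])
    have e2 : hC ^ 4 = hC⁻¹ * hC⁻¹ * hC⁻¹ := by
      have : hC ^ 4 = (hC ^ 3)⁻¹ := eq_inv_of_mul_eq_one_left (by rw [← pow_add, hC7])
      rw [this]; group
    rw [e1, e2, pow_two] at h
    simpa [relWord, sWord, ev, ev1, mul_assoc] using h
  | (n + 4) => simp [relWord, ev]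

theorem exists_rep {X : Type*} [MulAction H X] (p : ℕ → X)
    (hp : ∀ l : Letter, ∀ i < 72, ∃ j < 72, ev1 hB hC l • p i = p j) (g : H) :
    ∀ i < 72, ∃ j < 72, g • p i = p j := by
  have hmul : ∀ x y : H, (∀ i < 72, ∃ j < 72, x • p i = p j) →
      (∀ i < 72, ∃ j < 72, y • p i = p j) → ∀ i < 72, ∃ j < 72, (x * y) • p i = p j := by
    intro x y hx hy i hi
    obtain ⟨j, hj, e⟩ := hy i hi
    obtain ⟨k, hk, e'⟩ := hx j hj
    exact ⟨k, hk, by rw [mul_smul, e, e']⟩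
  have hbc : ∀ i < 72, ∃ j < 72, hA • p i = p j := by
    rw [hA_eq']; exact hmul _ _ (hp lb) (hp lc)
  have hA' : hA⁻¹ = hA := inv_eq_of_mul_eq_one_left (by rw [← pow_two, hA2])
  obtain ⟨w, rfl⟩ := PresentedGroup.mk_surjective (hurwitzRels 2) g
  induction w using FreeGroup.induction_on with
  | C1 => intro i hi; exact ⟨i, hi, by rw [map_one, one_smul]⟩
  | of x =>
    fin_cases x
    · exact hbc
    · exact hp lb
    · exact hp lc
  | inv_of x _ =>
    rw [map_inv]
    fin_cases x
    · change ∀ i < 72, ∃ j < 72, hA⁻¹ • p i = p j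
      rw [hA']; exact hbc
    · exact hp lB
    · exact hp lC
  | mul x y hx hy => rw [map_mul]; exact hmul _ _ hx hy

theorem upper : Finite H ∧ Nat.card H ≤ 504 := by
  obtain ⟨p, hp0, hp⟩ := closed_of_rels rels_hold
    (((1 : H) : H ⧸ Subgroup.zpowers hC)) (by
      rw [MulAction.Quotient.smul_coe, smul_eq_mul, mul_one]
      exact (QuotientGroup.eq.2 (by simp)))
  have hsurj : Function.Surjective (fun i : Fin 72 => p i) := by
    intro y
    obtain ⟨g, rfl⟩ := QuotientGroup.mk_surjective y
    obtain ⟨j, hj, e⟩ := exists_rep p hp g 0 (by norm_num)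
    refine ⟨⟨j, hj⟩, ?_⟩
    change p j = _
    rw [← e, hp0, MulAction.Quotient.smul_coe, smul_eq_mul, mul_one]
  have h1 : Nat.card (H ⧸ Subgroup.zpowers hC) ≤ 72 := by
    simpa using Nat.card_le_card_of_surjective _ hsurj
  have hfin1 : Finite (H ⧸ Subgroup.zpowers hC) := Finite.of_surjective _ hsurj
  have h2 : Nat.card (Subgroup.zpowers hC) ≤ 7 := by
    rw [Nat.card_zpowers]
    exact orderOf_le_of_pow_eq_one (by norm_num) hC7
  have hfin2 : Finite (Subgroup.zpowers hC) :=
    (isOfFinOrder_iff_pow_eq_one.2 ⟨7, by norm_num, hC7⟩).finite_zpowers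
  have h3 := Subgroup.card_eq_card_quotient_mul_card_subgroup (Subgroup.zpowers hC)
  refine ⟨Nat.finite_of_card_ne_zero ?_, ?_⟩
  · rw [h3]
    exact Nat.mul_ne_zero Nat.card_pos.ne' Nat.card_pos.ne'
  · rw [h3]
    exact (Nat.mul_le_mul h1 h2)

/-! The action of the group on the projective line over the field with eight elements. -/

def fB : Fin 9 → Fin 9 := ![2, 5, 3, 0, 8, 6, 1, 4, 7]
def fC : Fin 9 → Fin 9 := ![0, 1, 3, 4, 5, 6, 7, 8, 2]

def pB : Equiv.Perm (Fin 9) := ⟨fB, fun x => fB (fB x), by decide, by decide⟩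
def pC : Equiv.Perm (Fin 9) :=
  ⟨fC, fun x => fC (fC (fC (fC (fC (fC x))))), by decide, by decide⟩

def gens : Fin 3 → Equiv.Perm (Fin 9) := ![(pB * pC)⁻¹, pB, pC]

theorem gens_rels : ∀ r ∈ hurwitzRels 2, FreeGroup.lift gens r = 1 := by
  intro r hr
  simp only [hurwitzRels, Set.mem_insert_iff, Set.mem_singleton_iff] at hr
  rcases hr with rfl | rfl | rfl | rfl | rfl <;>
    simp only [map_mul, map_pow, FreeGroup.lift_apply_of] <;> decide +kernel

def φ : H →* Equiv.Perm (Fin 9) := PresentedGroup.toGroup gens_rels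

theorem φB : φ hB = pB := PresentedGroup.toGroup.of gens_rels
theorem φC : φ hC = pC := PresentedGroup.toGroup.of gens_rels

theorem φ_ev (w : List Letter) : φ (ev hB hC w) = ev pB pC w := by
  induction w with
  | nil => simp [ev]
  | cons l w ih =>
    rcases l with ⟨_ | _, _ | _⟩ <;> simp [ev, ev1, ih, φB, φC]

theorem pairs : ∀ x y : Fin 9, x ≠ y →
    ∃ w ∈ reps, ev pB pC w 0 = x ∧ ev pB pC w 1 = y := by
  decide +kernel

theorem dvd7 [Finite H] : 7 ∣ Nat.card H := by
  have : Fact (Nat.Prime 7) := ⟨by norm_num⟩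
  have h : orderOf hC = 7 := by
    refine orderOf_eq_prime hC7 fun h => ?_
    have h1 : pC = 1 := by rw [← φC, h, map_one]
    exact absurd h1 (by decide)
  exact h ▸ orderOf_dvd_natCard hC

theorem dvd72 [Finite H] : 72 ∣ Nat.card H := by
  let _ : MulAction H (Fin 9 × Fin 9) := MulAction.compHom _ φ
  have hsm : ∀ (g : H) (z : Fin 9 × Fin 9), g • z = (φ g z.1, φ g z.2) := fun _ _ => rfl
  have horb : MulAction.orbit H ((0, 1) : Fin 9 × Fin 9) =
      ((Finset.univ.filter fun z : Fin 9 × Fin 9 => z.1 ≠ z.2 : Finset _) : Set _) := by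
    ext ⟨x, y⟩
    simp only [Finset.coe_filter, Finset.mem_univ, true_and, Set.mem_ofPred_eq]
    constructor
    · rintro ⟨g, hg⟩
      simp only [hsm, Prod.mk.injEq] at hg
      rw [← hg.1, ← hg.2]
      exact fun h => absurd ((φ g).injective h) (by decide)
    · intro hxy
      obtain ⟨w, -, h1, h2⟩ := pairs x y hxy
      refine ⟨ev hB hC w, ?_⟩
      simp only [hsm, φ_ev, h1, h2]
  have hidx := MulAction.index_stabilizer H ((0, 1) : Fin 9 × Fin 9)
  rw [horb, Set.ncard_coe_finset] at hidx
  have hc : (Finset.univ.filter fun z : Fin 9 × Fin 9 => z.1 ≠ z.2).card = 72 := by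
    decide +kernel
  rw [hc] at hidx
  exact hidx ▸ Subgroup.index_dvd_card _

end HurwitzTC

theorem stmt_14 : Nat.card (PresentedGroup (hurwitzRels 2)) = 504 := by
  obtain ⟨hf, hle⟩ := HurwitzTC.upper
  have h : 7 * 72 ∣ Nat.card HurwitzTC.H :=
    Nat.Coprime.mul_dvd_of_dvd_of_dvd (by norm_num) HurwitzTC.dvd7 HurwitzTC.dvd72
  exact le_antisymm hle (Nat.le_of_dvd Nat.card_pos h)
end

section
/- Let H be the group with presentation ⟨A, B, C | A² = B³ = C⁷ = ABC = (B²CB²C⁴BC⁴)³ = 1⟩. Then H has order 168. -/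
/-- Two permutations `b`, `c` (inverses `e`, `d`) of `X` satisfying the relations of `H`. -/
structure HAct (X : Type*) where
  (b c d e: X → X) (hd : ∀ x, d (c x) = x) (hc : ∀ x, c (d x) = x)
  (he : ∀ x, e (b x) = x) (hb : ∀ x, b (e x) = x)
  (h3 : ∀ x, (b (b (b x))) = x) (h7 : ∀ x, (c (c (c (c (c (c (c x))))))) = x) (h2 : ∀ x, (c (b (c (b x)))) = x)
  (hS : ∀ x, (c (c (c (c (b (c (c (c (c (b (b (c (b (b (c (c (c (c (b (c (c (c (c (b (b (c (b (b (c (c (c (c (b (c (c (c (c (b (b (c (b (b x)))))))))))))))))))))))))))))))))))))))))) = x)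

set_option maxHeartbeats 4000000 in
theorem hurwitz_key {X : Type*} (s : HAct X) (p : X) (hp : s.c p = p) :
    (s.c (s.e (s.c (s.c (s.e p))))) = (s.d (s.b (s.d (s.d (s.b p))))) := by
  have i1 := s.hS (s.e (s.e (s.d (s.e (s.e (s.d (s.d (s.d (s.d (s.e (s.d (s.d (s.d (s.e (s.c (s.e (s.e (s.d (s.b (s.c (s.b (s.b (s.c (s.c (s.b (s.d (s.b (s.d (s.d (s.e (s.c (s.c (s.b p)))))))))))))))))))))))))))))))))
  have i2 := s.hS (s.e (s.e (s.d (s.d (s.e (s.c (s.c (s.b p))))))))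
  have i3 := s.hS (s.e (s.e (s.d (s.e (s.e (s.c (s.b (s.b (s.c (s.c (s.b (s.d (s.b (s.d (s.d (s.e (s.c (s.c (s.b p)))))))))))))))))))
  have i4 := s.h2 (s.c (s.c (s.b (s.d (s.e (s.c (s.c (s.b p))))))))
  have i5 := s.h2 (s.b (s.d (s.d (s.b p))))
  have i6 := s.h3 (s.d (s.b (s.d (s.d (s.b p)))))
  have i7 := s.h3 (s.b (s.c (s.c (s.b (s.d (s.b (s.d (s.d (s.e (s.c (s.c (s.b p))))))))))))
  have i8 := s.h3 (s.e (s.e (s.d (s.b (s.c (s.b (s.b (s.c (s.c (s.b (s.d (s.b (s.d (s.d (s.e (s.c (s.c (s.b p))))))))))))))))))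
  have i9 := s.h2 (s.b (s.d (s.e (s.e (s.c (s.c (s.c (s.c (s.b (s.d (s.d (s.d (s.b (s.d (s.d (s.e (s.c (s.c (s.b p)))))))))))))))))))
  have i10 := s.h3 (s.d (s.d (s.d (s.d (s.e (s.c (s.c (s.b p))))))))
  have i11 := s.h2 (s.c (s.b (s.b (s.c (s.c (s.b (s.d (s.b (s.d (s.d (s.e (s.c (s.c (s.b p))))))))))))))
  have i12 := s.h3 (s.b (s.d (s.b (s.d (s.d (s.d (s.d (s.e (s.c (s.c (s.b p)))))))))))
  have i13 := s.h2 (s.e (s.d (s.b (s.d (s.b (s.d (s.b (s.d (s.d (s.d (s.b (s.c (s.b (s.b (s.c (s.c (s.b (s.d (s.b (s.d (s.d (s.e (s.c (s.c (s.b p)))))))))))))))))))))))))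
  have i14 := s.h7 (s.d (s.d (s.e (s.c (s.c (s.b p))))))
  have i15 := s.h2 (s.e (s.d (s.b (s.c (s.c (s.c (s.b (s.d (s.b (s.d (s.d (s.e (s.c (s.c (s.b p)))))))))))))))
  have i16 := s.h2 (s.c (s.c (s.c (s.e (s.c (s.e (s.e (s.d (s.b (s.c (s.b (s.b (s.c (s.c (s.b (s.d (s.b (s.d (s.d (s.e (s.c (s.c (s.b p)))))))))))))))))))))))
  have i17 := s.h2 (s.e (s.c (s.c (s.c (s.c (s.b (s.d (s.d (s.d (s.b (s.d (s.d (s.e (s.c (s.c (s.b p))))))))))))))))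
  have i18 := s.h2 (s.c (s.c (s.c (s.b (s.d (s.b (s.d (s.d (s.e (s.c (s.c (s.b p))))))))))))
  have i19 := s.h3 (s.d (s.e (s.c (s.c (s.b p)))))
  have i20 := s.h2 (s.c (s.c (s.c (s.b (s.d (s.e (s.c (s.c (s.b p)))))))))
  have i21 := s.h7 (s.e (s.e (s.d (s.d (s.b (s.d (s.d (s.d (s.d (s.e (s.c (s.c (s.b p)))))))))))))
  have i22 := s.h3 (s.e (s.d (s.d (s.b p))))
  have i23 := s.h3 (s.d (s.d (s.d (s.e (s.c (s.c (s.b p)))))))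
  have i24 := s.h3 (s.b p)
  have i25 := s.h2 (s.c (s.b (s.d (s.b (s.d (s.d (s.e (s.c (s.c (s.b p))))))))))
  have i26 := s.h2 (s.d (s.d (s.d (s.e (s.c (s.c (s.b p)))))))
  have i27 := s.h2 (s.d (s.d (s.d (s.d (s.b (s.d (s.d (s.e (s.c (s.c (s.b p)))))))))))
  have i28 := s.h2 (s.c (s.e (s.c (s.e (s.e (s.d (s.b (s.c (s.b (s.b (s.c (s.c (s.b (s.d (s.b (s.d (s.d (s.e (s.c (s.c (s.b p)))))))))))))))))))))
  have i29 := s.h2 (s.c (s.c (s.b (s.d (s.d (s.e (s.c (s.c (s.b p)))))))))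
  have i30 := s.h2 (s.d (s.d (s.e (s.c (s.c (s.b p))))))
  have i31 := s.h3 (s.c (s.c (s.c (s.e (s.c (s.e (s.e (s.d (s.b (s.c (s.b (s.b (s.c (s.c (s.b (s.d (s.b (s.d (s.d (s.e (s.c (s.c (s.b p)))))))))))))))))))))))
  have i32 := s.h2 (s.b (s.d (s.e (s.c (s.c (s.b p))))))
  have i33 := s.h3 (s.b (s.c (s.b (s.b (s.c (s.c (s.b (s.d (s.b (s.d (s.d (s.e (s.c (s.c (s.b p)))))))))))))))
  have i34 := s.h2 (s.b (s.d (s.d (s.d (s.d (s.e (s.c (s.c (s.b p)))))))))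
  have i35 := s.h2 (s.e (s.e (s.d (s.b (s.d (s.d (s.b p)))))))
  have i36 := s.h3 (s.d (s.d (s.b (s.c (s.b (s.b (s.c (s.c (s.b (s.d (s.b (s.d (s.d (s.e (s.c (s.c (s.b p)))))))))))))))))
  have i37 := s.h3 (s.d (s.d (s.d (s.b (s.d (s.d (s.e (s.c (s.c (s.b p))))))))))
  have i38 := s.h7 (s.b (s.d (s.d (s.b (s.d (s.d (s.e (s.c (s.c (s.b p))))))))))
  have i39 := s.h3 (s.d (s.b (s.d (s.d (s.d (s.b (s.c (s.b (s.b (s.c (s.c (s.b (s.d (s.b (s.d (s.d (s.e (s.c (s.c (s.b p))))))))))))))))))))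
  have i40 := s.h2 (s.b p)
  have i41 := s.h3 (s.d (s.d (s.e (s.c (s.c (s.b p))))))
  have i42 := s.h3 (s.b (s.d (s.d (s.b (s.d (s.d (s.e (s.c (s.c (s.b p))))))))))
  have i43 := s.h7 (s.e (s.e (s.d (s.b (s.c (s.b (s.b (s.c (s.c (s.b (s.d (s.b (s.d (s.d (s.e (s.c (s.c (s.b p))))))))))))))))))
  have i44 := s.h2 (s.d (s.d (s.b p)))
  have i45 := s.h7 (s.b (s.c (s.c (s.b (s.d (s.d (s.e (s.c (s.c (s.b p))))))))))
  have i46 := s.h2 (s.e (s.d (s.d (s.b p))))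
  have i47 := s.h3 (s.c (s.e (s.c (s.e (s.e (s.d (s.b (s.c (s.b (s.b (s.c (s.c (s.b (s.d (s.b (s.d (s.d (s.e (s.c (s.c (s.b p)))))))))))))))))))))
  have i48 := s.h2 (s.e (s.d (s.d (s.d (s.b (s.d (s.d (s.e (s.c (s.c (s.b p)))))))))))
  have i49 := s.h3 (s.b (s.c (s.c (s.b (s.d (s.d (s.e (s.c (s.c (s.b p))))))))))
  have i50 := s.h2 (s.b (s.d (s.d (s.d (s.b (s.d (s.d (s.e (s.c (s.c (s.b p)))))))))))
  have i51 := s.h7 (s.c (s.e (s.c (s.e (s.e (s.d (s.b (s.c (s.b (s.b (s.c (s.c (s.b (s.d (s.b (s.d (s.d (s.e (s.c (s.c (s.b p)))))))))))))))))))))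
  have i52 := s.h2 (s.c (s.c (s.e (s.e (s.d (s.b (s.c (s.b (s.b (s.c (s.c (s.b (s.d (s.b (s.d (s.d (s.e (s.c (s.c (s.b p))))))))))))))))))))
  have i53 := s.h7 (s.d (s.b (s.d (s.d (s.d (s.d (s.e (s.c (s.c (s.b p))))))))))
  have i54 := s.h3 (s.c (s.b (s.d (s.d (s.d (s.b (s.d (s.d (s.e (s.c (s.c (s.b p))))))))))))
  have i55 := s.h2 (s.d (s.d (s.d (s.b (s.d (s.d (s.e (s.c (s.c (s.b p))))))))))
  have i56 := s.h7 (s.c (s.b (s.d (s.d (s.e (s.c (s.c (s.b p))))))))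
  have i57 := s.h2 p
  have i58 := s.h3 (s.c (s.c (s.b p)))
  have i59 := s.h2 (s.c (s.b (s.d (s.e (s.c (s.c (s.b p)))))))
  have i60 := s.h2 (s.b (s.d (s.d (s.d (s.b (s.c (s.b (s.b (s.c (s.c (s.b (s.d (s.b (s.d (s.d (s.e (s.c (s.c (s.b p)))))))))))))))))))
  have i61 := s.h2 (s.b (s.d (s.d (s.b (s.d (s.d (s.e (s.c (s.c (s.b p))))))))))
  have i62 := s.h3 (s.d (s.b (s.d (s.d (s.e (s.c (s.c (s.b p))))))))
  have i63 := s.h2 (s.d (s.b (s.c (s.b (s.b (s.c (s.c (s.b (s.d (s.b (s.d (s.d (s.e (s.c (s.c (s.b p))))))))))))))))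
  have i64 := s.h3 (s.d (s.d (s.b (s.d (s.d (s.d (s.d (s.e (s.c (s.c (s.b p)))))))))))
  have i65 := s.h7 (s.b (s.b (s.c (s.c (s.b (s.d (s.b (s.d (s.d (s.e (s.c (s.c (s.b p)))))))))))))
  have i66 := s.h2 (s.e (s.c (s.c (s.b p))))
  have i67 := s.h7 (s.c (s.c (s.c (s.b p))))
  have i68 := s.h3 (s.d (s.e (s.e (s.c (s.c (s.c (s.c (s.b (s.d (s.d (s.d (s.b (s.d (s.d (s.e (s.c (s.c (s.b p))))))))))))))))))
  have i69 := s.h7 (s.d (s.b (s.d (s.d (s.d (s.b (s.c (s.b (s.b (s.c (s.c (s.b (s.d (s.b (s.d (s.d (s.e (s.c (s.c (s.b p))))))))))))))))))))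
  have i70 := s.h2 (s.e (s.e (s.c (s.c (s.c (s.c (s.b (s.d (s.d (s.d (s.b (s.d (s.d (s.e (s.c (s.c (s.b p)))))))))))))))))
  grind -ring -linarith -lia -ac -mbtc (splits := 0) (gen := 200) (ematch := 200) (instances := 1000000) [! HAct.hd, ! HAct.hc, ! HAct.he, ! HAct.hb]
set_option maxHeartbeats 4000000 in
theorem hurwitz_table {X : Type*} (s : HAct X) (p : X) (hp : s.c p = p) (h : (s.c (s.e (s.c (s.c (s.e p))))) = (s.d (s.b (s.d (s.d (s.b p)))))) :
    (s.c p) = p ∧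
   (s.b (s.b p)) = (s.e p) ∧
   (s.c (s.b p)) = (s.e p) ∧
   (s.b (s.e p)) = p ∧
   (s.c (s.d (s.b p))) = (s.b p) ∧
   (s.b (s.c (s.e p))) = (s.d (s.b p)) ∧
   (s.b (s.b (s.d (s.b p)))) = (s.c (s.e p)) ∧
   (s.c (s.d (s.d (s.b p)))) = (s.d (s.b p)) ∧
   (s.b (s.c (s.c (s.e p)))) = (s.d (s.b (s.d (s.b p)))) ∧
   (s.c (s.c (s.c (s.e p)))) = (s.d (s.d (s.d (s.b p)))) ∧
   (s.b (s.c (s.b (s.d (s.b p))))) = (s.d (s.d (s.b p))) ∧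
   (s.b (s.d (s.b (s.d (s.b p))))) = (s.e (s.c (s.c (s.e p)))) ∧
   (s.c (s.d (s.b (s.d (s.b p))))) = (s.b (s.d (s.b p))) ∧
   (s.b (s.b (s.d (s.d (s.b p))))) = (s.c (s.b (s.d (s.b p)))) ∧
   (s.c (s.d (s.d (s.d (s.b p))))) = (s.d (s.d (s.b p))) ∧
   (s.b (s.e (s.c (s.c (s.e p))))) = (s.c (s.c (s.e p))) ∧
   (s.c (s.e (s.c (s.c (s.e p))))) = (s.d (s.b (s.d (s.d (s.b p))))) ∧
   (s.b (s.c (s.c (s.b (s.d (s.b p)))))) = (s.d (s.b (s.d (s.d (s.b p))))) ∧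
   (s.b (s.d (s.d (s.b (s.d (s.b p)))))) = (s.c (s.c (s.b (s.d (s.b p))))) ∧
   (s.c (s.d (s.d (s.b (s.d (s.b p)))))) = (s.d (s.b (s.d (s.b p)))) ∧
   (s.b (s.c (s.b (s.d (s.d (s.b p)))))) = (s.d (s.d (s.d (s.b p)))) ∧
   (s.b (s.d (s.b (s.d (s.d (s.b p)))))) = (s.d (s.d (s.b (s.d (s.b p))))) ∧
   (s.c (s.d (s.b (s.d (s.d (s.b p)))))) = (s.b (s.d (s.d (s.b p)))) ∧
   (s.b (s.b (s.d (s.d (s.d (s.b p)))))) = (s.c (s.b (s.d (s.d (s.b p))))) ∧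
   (s.c (s.b (s.d (s.d (s.d (s.b p)))))) = (s.e (s.c (s.c (s.e p)))) ∧
   (s.b (s.c (s.c (s.c (s.b (s.d (s.b p))))))) = (s.d (s.d (s.d (s.b (s.d (s.b p)))))) ∧
   (s.c (s.c (s.c (s.c (s.b (s.d (s.b p))))))) = (s.d (s.d (s.d (s.b (s.d (s.b p)))))) ∧
   (s.b (s.d (s.d (s.d (s.b (s.d (s.b p))))))) = (s.e (s.c (s.c (s.c (s.b (s.d (s.b p))))))) ∧
   (s.c (s.d (s.d (s.d (s.b (s.d (s.b p))))))) = (s.d (s.d (s.b (s.d (s.b p))))) ∧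
   (s.b (s.c (s.c (s.b (s.d (s.d (s.b p))))))) = (s.d (s.b (s.d (s.d (s.d (s.b p)))))) ∧
   (s.c (s.c (s.c (s.b (s.d (s.d (s.b p))))))) = (s.d (s.b (s.d (s.d (s.d (s.b p)))))) ∧
   (s.b (s.d (s.b (s.d (s.d (s.d (s.b p))))))) = (s.e (s.c (s.c (s.b (s.d (s.d (s.b p))))))) ∧
   (s.c (s.d (s.b (s.d (s.d (s.d (s.b p))))))) = (s.b (s.d (s.d (s.d (s.b p))))) ∧
   (s.b (s.e (s.c (s.c (s.c (s.b (s.d (s.b p)))))))) = (s.c (s.c (s.c (s.b (s.d (s.b p)))))) ∧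
   (s.c (s.e (s.c (s.c (s.c (s.b (s.d (s.b p)))))))) = (s.e (s.c (s.c (s.c (s.b (s.d (s.b p))))))) ∧
   (s.b (s.e (s.c (s.c (s.b (s.d (s.d (s.b p)))))))) = (s.c (s.c (s.b (s.d (s.d (s.b p)))))) ∧
   (s.c (s.e (s.c (s.c (s.b (s.d (s.d (s.b p)))))))) = (s.e (s.c (s.c (s.b (s.d (s.d (s.b p))))))) := by
  have i0 := s.h3 p
  have j0 := s.h7 p
  have k0 := s.h2 p
  have i1 := s.h3 (s.b p)
  have j1 := s.h7 (s.b p)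
  have k1 := s.h2 (s.b p)
  have i2 := s.h3 (s.e p)
  have j2 := s.h7 (s.e p)
  have k2 := s.h2 (s.e p)
  have i3 := s.h3 (s.d (s.b p))
  have j3 := s.h7 (s.d (s.b p))
  have k3 := s.h2 (s.d (s.b p))
  have i4 := s.h3 (s.c (s.e p))
  have j4 := s.h7 (s.c (s.e p))
  have k4 := s.h2 (s.c (s.e p))
  have i5 := s.h3 (s.b (s.d (s.b p)))
  have j5 := s.h7 (s.b (s.d (s.b p)))
  have k5 := s.h2 (s.b (s.d (s.b p)))
  have i6 := s.h3 (s.d (s.d (s.b p)))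
  have j6 := s.h7 (s.d (s.d (s.b p)))
  have k6 := s.h2 (s.d (s.d (s.b p)))
  have i7 := s.h3 (s.c (s.c (s.e p)))
  have j7 := s.h7 (s.c (s.c (s.e p)))
  have k7 := s.h2 (s.c (s.c (s.e p)))
  have i8 := s.h3 (s.c (s.b (s.d (s.b p))))
  have j8 := s.h7 (s.c (s.b (s.d (s.b p))))
  have k8 := s.h2 (s.c (s.b (s.d (s.b p))))
  have i9 := s.h3 (s.d (s.b (s.d (s.b p))))
  have j9 := s.h7 (s.d (s.b (s.d (s.b p))))
  have k9 := s.h2 (s.d (s.b (s.d (s.b p))))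
  have i10 := s.h3 (s.b (s.d (s.d (s.b p))))
  have j10 := s.h7 (s.b (s.d (s.d (s.b p))))
  have k10 := s.h2 (s.b (s.d (s.d (s.b p))))
  have i11 := s.h3 (s.d (s.d (s.d (s.b p))))
  have j11 := s.h7 (s.d (s.d (s.d (s.b p))))
  have k11 := s.h2 (s.d (s.d (s.d (s.b p))))
  have i12 := s.h3 (s.e (s.c (s.c (s.e p))))
  have j12 := s.h7 (s.e (s.c (s.c (s.e p))))
  have k12 := s.h2 (s.e (s.c (s.c (s.e p))))
  have i13 := s.h3 (s.c (s.c (s.b (s.d (s.b p)))))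
  have j13 := s.h7 (s.c (s.c (s.b (s.d (s.b p)))))
  have k13 := s.h2 (s.c (s.c (s.b (s.d (s.b p)))))
  have i14 := s.h3 (s.d (s.d (s.b (s.d (s.b p)))))
  have j14 := s.h7 (s.d (s.d (s.b (s.d (s.b p)))))
  have k14 := s.h2 (s.d (s.d (s.b (s.d (s.b p)))))
  have i15 := s.h3 (s.c (s.b (s.d (s.d (s.b p)))))
  have j15 := s.h7 (s.c (s.b (s.d (s.d (s.b p)))))
  have k15 := s.h2 (s.c (s.b (s.d (s.d (s.b p)))))
  have i16 := s.h3 (s.d (s.b (s.d (s.d (s.b p)))))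
  have j16 := s.h7 (s.d (s.b (s.d (s.d (s.b p)))))
  have k16 := s.h2 (s.d (s.b (s.d (s.d (s.b p)))))
  have i17 := s.h3 (s.b (s.d (s.d (s.d (s.b p)))))
  have j17 := s.h7 (s.b (s.d (s.d (s.d (s.b p)))))
  have k17 := s.h2 (s.b (s.d (s.d (s.d (s.b p)))))
  have i18 := s.h3 (s.c (s.c (s.c (s.b (s.d (s.b p))))))
  have j18 := s.h7 (s.c (s.c (s.c (s.b (s.d (s.b p))))))
  have k18 := s.h2 (s.c (s.c (s.c (s.b (s.d (s.b p))))))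
  have i19 := s.h3 (s.d (s.d (s.d (s.b (s.d (s.b p))))))
  have j19 := s.h7 (s.d (s.d (s.d (s.b (s.d (s.b p))))))
  have k19 := s.h2 (s.d (s.d (s.d (s.b (s.d (s.b p))))))
  have i20 := s.h3 (s.c (s.c (s.b (s.d (s.d (s.b p))))))
  have j20 := s.h7 (s.c (s.c (s.b (s.d (s.d (s.b p))))))
  have k20 := s.h2 (s.c (s.c (s.b (s.d (s.d (s.b p))))))
  have i21 := s.h3 (s.d (s.b (s.d (s.d (s.d (s.b p))))))
  have j21 := s.h7 (s.d (s.b (s.d (s.d (s.d (s.b p))))))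
  have k21 := s.h2 (s.d (s.b (s.d (s.d (s.d (s.b p))))))
  have i22 := s.h3 (s.e (s.c (s.c (s.c (s.b (s.d (s.b p)))))))
  have j22 := s.h7 (s.e (s.c (s.c (s.c (s.b (s.d (s.b p)))))))
  have k22 := s.h2 (s.e (s.c (s.c (s.c (s.b (s.d (s.b p)))))))
  have i23 := s.h3 (s.e (s.c (s.c (s.b (s.d (s.d (s.b p)))))))
  have j23 := s.h7 (s.e (s.c (s.c (s.b (s.d (s.d (s.b p)))))))
  have k23 := s.h2 (s.e (s.c (s.c (s.b (s.d (s.d (s.b p)))))))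
  refine ⟨?_, ?_, ?_, ?_, ?_, ?_, ?_, ?_, ?_, ?_, ?_, ?_, ?_, ?_, ?_, ?_, ?_, ?_, ?_, ?_, ?_, ?_, ?_, ?_, ?_, ?_, ?_, ?_, ?_, ?_, ?_, ?_, ?_, ?_, ?_, ?_, ?_⟩
  all_goals grind -ring -linarith -lia -ac -mbtc (splits := 0) (gen := 200) (ematch := 200) (instances := 1000000) [! HAct.hd, ! HAct.hc, ! HAct.he, ! HAct.hb]

theorem hurwitz_closed {X : Type*} [DecidableEq X] (s : HAct X) (p : X) (hp : s.c p = p) :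
    ∃ F : Finset X, F.card ≤ 24 ∧ p ∈ F ∧ ∀ x ∈ F, s.b x ∈ F ∧ s.c x ∈ F := by
  obtain ⟨h0, h1, h2, h3, h4, h5, h6, h7, h8, h9, h10, h11, h12, h13, h14, h15, h16, h17, h18, h19, h20, h21, h22, h23, h24, h25, h26, h27, h28, h29, h30, h31, h32, h33, h34, h35, h36⟩ :=
    hurwitz_table s p hp (hurwitz_key s p hp)
  refine ⟨List.toFinset [p,
    (s.b p),
    (s.e p),
    (s.d (s.b p)),
    (s.c (s.e p)),
    (s.b (s.d (s.b p))),
    (s.d (s.d (s.b p))),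
    (s.c (s.c (s.e p))),
    (s.c (s.b (s.d (s.b p)))),
    (s.d (s.b (s.d (s.b p)))),
    (s.b (s.d (s.d (s.b p)))),
    (s.d (s.d (s.d (s.b p)))),
    (s.e (s.c (s.c (s.e p)))),
    (s.c (s.c (s.b (s.d (s.b p))))),
    (s.d (s.d (s.b (s.d (s.b p))))),
    (s.c (s.b (s.d (s.d (s.b p))))),
    (s.d (s.b (s.d (s.d (s.b p))))),
    (s.b (s.d (s.d (s.d (s.b p))))),
    (s.c (s.c (s.c (s.b (s.d (s.b p)))))),
    (s.d (s.d (s.d (s.b (s.d (s.b p)))))),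
    (s.c (s.c (s.b (s.d (s.d (s.b p)))))),
    (s.d (s.b (s.d (s.d (s.d (s.b p)))))),
    (s.e (s.c (s.c (s.c (s.b (s.d (s.b p))))))),
    (s.e (s.c (s.c (s.b (s.d (s.d (s.b p)))))))], (List.toFinset_card_le _).trans (by simp), by simp, ?_⟩
  intro x hx
  simp only [List.mem_toFinset, List.mem_cons, List.not_mem_nil, or_false] at hx ⊢
  rcases hx with rfl | rfl | rfl | rfl | rfl | rfl | rfl | rfl | rfl | rfl | rfl | rfl | rfl | rfl | rfl | rfl | rfl | rfl | rfl | rfl | rfl | rfl | rfl | rfl <;>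
    simp only [h0, h1, h2, h3, h4, h5, h6, h7, h8, h9, h10, h11, h12, h13, h14, h15, h16, h17, h18, h19, h20, h21, h22, h23, h24, h25, h26, h27, h28, h29, h30, h31, h32, h33, h34, h35, h36, true_or, or_true, and_self]

/-! ### The homomorphism to `PSL(2,7)` acting on eight points -/

def permA : Equiv.Perm (Fin 8) :=
  ⟨![5, 2, 1, 4, 3, 0, 7, 6], ![5, 2, 1, 4, 3, 0, 7, 6], by decide, by decide⟩

def permB : Equiv.Perm (Fin 8) :=
  ⟨![7, 5, 2, 1, 4, 3, 0, 6], ![6, 3, 2, 5, 4, 1, 7, 0], by decide, by decide⟩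

def permC : Equiv.Perm (Fin 8) :=
  ⟨![1, 2, 3, 4, 5, 6, 0, 7], ![6, 0, 1, 2, 3, 4, 5, 7], by decide, by decide⟩

def permGen : Fin 3 → Equiv.Perm (Fin 8) := ![permA, permB, permC]

set_option maxRecDepth 100000 in
theorem permGen_rels : ∀ r ∈ hurwitzRels 3, FreeGroup.lift permGen r = 1 := by
  intro r hr
  simp only [hurwitzRels, Set.mem_insert_iff, Set.mem_singleton_iff] at hr
  rcases hr with rfl | rfl | rfl | rfl | rfl <;>
    simp only [map_mul, map_pow, FreeGroup.lift_apply_of, permGen, Matrix.cons_val_zero,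
      Matrix.cons_val_one, Matrix.cons_val] <;> decide

abbrev HGroup : Type := PresentedGroup (hurwitzRels 3)

def toPerm : HGroup →* Equiv.Perm (Fin 8) := PresentedGroup.toGroup permGen_rels

abbrev gA : HGroup := PresentedGroup.of 0
abbrev gB : HGroup := PresentedGroup.of 1
abbrev gC : HGroup := PresentedGroup.of 2

theorem toPerm_gB : toPerm gB = permB := PresentedGroup.toGroup.of permGen_rels
theorem toPerm_gC : toPerm gC = permC := PresentedGroup.toGroup.of permGen_rels

theorem rel_one {r : FreeGroup (Fin 3)} (h : r ∈ hurwitzRels 3) :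
    PresentedGroup.mk (hurwitzRels 3) r = 1 :=
  PresentedGroup.one_of_mem h

theorem gB3 : gB ^ 3 = 1 := rel_one (r := FreeGroup.of 1 ^ 3) (by simp [hurwitzRels])
theorem gC7 : gC ^ 7 = 1 := rel_one (r := FreeGroup.of 2 ^ 7) (by simp [hurwitzRels])
theorem gA2 : gA ^ 2 = 1 := rel_one (r := FreeGroup.of 0 ^ 2) (by simp [hurwitzRels])
theorem gABC : gA * gB * gC = 1 :=
  rel_one (r := FreeGroup.of 0 * FreeGroup.of 1 * FreeGroup.of 2) (by simp [hurwitzRels])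
theorem gS3 : (gB ^ 2 * gC * gB ^ 2 * gC ^ 4 * gB * gC ^ 4) ^ 3 = 1 :=
  rel_one (r := (FreeGroup.of 1 ^ 2 * FreeGroup.of 2 * FreeGroup.of 1 ^ 2 *
     FreeGroup.of 2 ^ 4 * FreeGroup.of 1 * FreeGroup.of 2 ^ 4) ^ 3) (by simp [hurwitzRels])

theorem gA_eq : gA = gC⁻¹ * gB⁻¹ := by
  have h := gABC
  rw [mul_assoc] at h
  rw [eq_inv_of_mul_eq_one_left h, mul_inv_rev]

theorem gBC2 : gB * gC * gB * gC = 1 := by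
  have h := gA2
  rw [gA_eq, ← mul_inv_rev, inv_pow, inv_eq_one, pow_two] at h
  simpa only [mul_assoc] using h

/-- A relation `w = 1` makes `w⁻¹` act trivially. -/
theorem smul_of_eq_one {X : Type*} [MulAction HGroup X] {w : HGroup} (h : w = 1) (x : X) :
    w⁻¹ • x = x := by rw [h, inv_one, one_smul]

def hAct (X : Type*) [MulAction HGroup X] : HAct X where
  b x := gB⁻¹ • x
  c x := gC⁻¹ • x
  d x := gC • x
  e x := gB • x
  hd x := smul_inv_smul _ _
  hc x := inv_smul_smul _ _
  he x := smul_inv_smul _ _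
  hb x := inv_smul_smul _ _
  h3 x := by
    have h := smul_of_eq_one gB3 x
    simpa only [pow_succ, pow_zero, one_mul, mul_inv_rev, mul_smul] using h
  h7 x := by
    have h := smul_of_eq_one gC7 x
    simpa only [pow_succ, pow_zero, one_mul, mul_inv_rev, mul_smul] using h
  h2 x := by
    have h := smul_of_eq_one gBC2 x
    simpa only [mul_inv_rev, mul_smul] using h
  hS x := by
    have h := smul_of_eq_one gS3 x
    simpa only [pow_succ, pow_zero, one_mul, mul_inv_rev, mul_smul] using h

open scoped Pointwise in
theorem hurwitz_univ (X : Type*) [MulAction HGroup X] [MulAction.IsPretransitive HGroup X]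
    (p : X) (hp : gC⁻¹ • p = p) : Finite X ∧ Nat.card X ≤ 24 := by
  classical
  obtain ⟨F, hF, hpF, hcl⟩ := hurwitz_closed (hAct X) p hp
  have mem_stab : ∀ g : HGroup, (∀ x ∈ F, g • x ∈ F) → g ∈ MulAction.stabilizer HGroup F := by
    intro g hg
    rw [MulAction.mem_stabilizer_iff]
    refine Finset.eq_of_subset_of_card_le ?_ (by rw [Finset.card_smul_finset])
    intro y hy
    obtain ⟨x, hx, rfl⟩ := Finset.mem_smul_finset.1 hy
    exact hg x hx
  have hB : gB ∈ MulAction.stabilizer HGroup F :=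
    inv_mem_iff.1 (mem_stab _ fun x hx => (hcl x hx).1)
  have hC : gC ∈ MulAction.stabilizer HGroup F :=
    inv_mem_iff.1 (mem_stab _ fun x hx => (hcl x hx).2)
  have hA : gA ∈ MulAction.stabilizer HGroup F := by
    rw [gA_eq]; exact mul_mem (inv_mem hC) (inv_mem hB)
  have htop : MulAction.stabilizer HGroup F = ⊤ := by
    rw [eq_top_iff, ← PresentedGroup.closure_range_of, Subgroup.closure_le]
    rintro _ ⟨i, rfl⟩
    fin_cases i
    · exact hA
    · exact hB
    · exact hC
  have hall : ∀ x : X, x ∈ F := by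
    intro x
    obtain ⟨g, rfl⟩ := MulAction.exists_smul_eq HGroup p x
    have hg : g ∈ MulAction.stabilizer HGroup F := by rw [htop]; trivial
    rw [MulAction.mem_stabilizer_iff] at hg
    rw [← hg]
    exact Finset.smul_mem_smul_finset hpF
  have : Fintype X := ⟨F, hall⟩
  refine ⟨inferInstance, ?_⟩
  rw [Nat.card_eq_fintype_card, ← Finset.card_univ]
  exact (Finset.card_le_card fun x _ => hall x).trans hF

theorem card_zpowers_gC_dvd : Nat.card (Subgroup.zpowers gC) ∣ 7 := by
  rw [Nat.card_zpowers]; exact orderOf_dvd_of_pow_eq_one gC7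

theorem finite_and_card_le : Nat.card HGroup ≠ 0 ∧ Nat.card HGroup ≤ 168 := by
  have h7 := card_zpowers_gC_dvd
  have h7' := Nat.le_of_dvd (by norm_num) h7
  have h70 := Nat.pos_of_dvd_of_pos h7 (by norm_num)
  obtain ⟨hfin, h24⟩ := hurwitz_univ (HGroup ⧸ Subgroup.zpowers gC) ((1 : HGroup) : HGroup ⧸ _)
    (by
      rw [MulAction.Quotient.smul_coe, QuotientGroup.eq]
      simp)
  have h := (Subgroup.zpowers gC).card_mul_index
  have hpos : 0 < (Subgroup.zpowers gC).index := Nat.card_pos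
  have h24' : (Subgroup.zpowers gC).index ≤ 24 := h24
  rw [← h]
  exact ⟨(Nat.mul_pos h70 hpos).ne', (Nat.mul_le_mul h7' h24').trans (by norm_num)⟩

theorem dvd_card : 168 ∣ Nat.card HGroup := by
  have h3 : orderOf gB = 3 := by
    have : Fact (Nat.Prime 3) := ⟨by norm_num⟩
    refine orderOf_eq_prime gB3 fun h => ?_
    have h' := toPerm_gB
    rw [h, map_one] at h'
    revert h'; decide
  have h7 : orderOf gC = 7 := by
    have : Fact (Nat.Prime 7) := ⟨by norm_num⟩
    refine orderOf_eq_prime gC7 fun h => ?_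
    have h' := toPerm_gC
    rw [h, map_one] at h'
    revert h'; decide
  have h8 : 8 ∣ Nat.card HGroup := by
    letI : MulAction HGroup (Fin 8) := MulAction.compHom (Fin 8) toPerm
    have hsmul : ∀ (g : HGroup) (i : Fin 8), g • i = toPerm g i := fun _ _ => rfl
    have hex : ∀ i : Fin 8, ∃ k : Fin 7, ∃ l : Fin 2,
        (permC ^ (k : ℕ) * permB ^ (l : ℕ)) 0 = i := by decide
    have : MulAction.IsPretransitive HGroup (Fin 8) := by
      refine (MulAction.isPretransitive_iff_base (0 : Fin 8)).2 fun i => ?_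
      obtain ⟨k, l, hkl⟩ := hex i
      refine ⟨gC ^ (k : ℕ) * gB ^ (l : ℕ), ?_⟩
      rw [hsmul, map_mul, map_pow, map_pow, toPerm_gC, toPerm_gB]
      exact hkl
    have h := MulAction.index_stabilizer_of_transitive HGroup (0 : Fin 8)
    rw [Nat.card_fin] at h
    rw [← h]
    exact Subgroup.index_dvd_card _
  have d3 : 3 ∣ Nat.card HGroup := h3 ▸ orderOf_dvd_natCard gB
  have d7 : 7 ∣ Nat.card HGroup := h7 ▸ orderOf_dvd_natCard gC
  omega

theorem stmt_15 : Nat.card (PresentedGroup (hurwitzRels 3)) = 168 := by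
  obtain ⟨h0, hle⟩ := finite_and_card_le
  exact le_antisymm hle (Nat.le_of_dvd (Nat.pos_of_ne_zero h0) dvd_card)
end

section
/- Let H be the group with presentation ⟨A, B, C | A² = B³ = C⁷ = ABC = (B²CB²C⁴BC⁴)⁴ = 1⟩. Then H has order 16515072. -/
namespace HW

/-! ### Words, free and cyclic reduction -/

abbrev Cert := List ℕ × List ℕ × ℕ × List (ℕ × ℕ × ℕ × ℕ)

def push (iv : ℕ → ℕ) (x : ℕ) : List ℕ → List ℕ
  | [] => [x]
  | y :: t => bif Nat.beq y (iv x) then t else x :: y :: t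

def red (iv : ℕ → ℕ) : List ℕ → List ℕ
  | [] => []
  | x :: t => push iv x (red iv t)

def strip (iv : ℕ → ℕ) : ℕ → List ℕ → List ℕ
  | 0, w => w
  | _ + 1, [] => []
  | k + 1, x :: t =>
    match t.reverse with
    | [] => [x]
    | y :: s => bif Nat.beq y (iv x) then strip iv k s.reverse else x :: t

def cyc (iv : ℕ → ℕ) (w : List ℕ) : List ℕ := strip iv 60 (red iv w)

def rotl (w : List ℕ) (k : ℕ) : List ℕ := w.drop k ++ w.take k

/-- Evaluate a list completely before passing it on. -/
def force {α : Type} : List ℕ → (List ℕ → α) → α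
  | [], k => k []
  | x :: t, k => force t (fun t' => k (x :: t'))

theorem force_eq {α : Type} (l : List ℕ) (k : List ℕ → α) : force l k = k l := by
  induction l generalizing k with
  | nil => rfl
  | cons x t ih => simp [force, ih]

section eval
variable {G : Type*} [Group G]

def ev (v : ℕ → G) : List ℕ → G
  | [] => 1
  | x :: t => v x * ev v t

theorem ev_append (v : ℕ → G) (s t : List ℕ) : ev v (s ++ t) = ev v s * ev v t := by
  induction s with
  | nil => simp [ev]
  | cons x s ih => simp [ev, ih, mul_assoc]

theorem ev_push {iv : ℕ → ℕ} {v : ℕ → G} (h : ∀ x, v (iv x) = (v x)⁻¹) (x : ℕ) (t : List ℕ) :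
    ev v (push iv x t) = v x * ev v t := by
  cases t with
  | nil => simp [push, ev]
  | cons y t =>
    simp only [push]
    cases hb : Nat.beq y (iv x) with
    | false => simp [ev]
    | true =>
      have : y = iv x := Nat.eq_of_beq_eq_true hb
      simp [ev, this, h]

theorem ev_red {iv : ℕ → ℕ} {v : ℕ → G} (h : ∀ x, v (iv x) = (v x)⁻¹) (t : List ℕ) :
    ev v (red iv t) = ev v t := by
  induction t with
  | nil => rfl
  | cons x t ih => simp [red, ev_push h, ih, ev]

theorem ev_comm {v : ℕ → G} {m : G} (hm : ∀ x, v x * m = m * v x) (t : List ℕ) :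
    ev v t * m = m * ev v t := by
  induction t with
  | nil => simp [ev]
  | cons x t ih => rw [ev, mul_assoc, ih, ← mul_assoc, hm, mul_assoc]

/-- Cyclic reduction preserves the equation with a central element. -/
theorem ev_strip {iv : ℕ → ℕ} {v : ℕ → G} (h : ∀ x, v (iv x) = (v x)⁻¹) (m : G)
    (hm : ∀ x, v x * m = m * v x) (k : ℕ) (t : List ℕ) :
    ev v (strip iv k t) = m ↔ ev v t = m := by
  induction k generalizing t with
  | zero => simp [strip]
  | succ k ih =>
    cases t with
    | nil => simp [strip]
    | cons x t =>
      simp only [strip]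
      split
      · rename_i h0
        have : t = [] := by simpa using h0
        simp [this]
      · rename_i y s h0
        have ht : t = s.reverse ++ [y] := by
          have := congrArg List.reverse h0
          simpa using this
        cases hb : Nat.beq y (iv x) with
        | false => simp
        | true =>
          have hy : y = iv x := Nat.eq_of_beq_eq_true hb
          simp only [cond_true, ih]
          rw [ht]
          simp only [ev, ev_append, hy, h, mul_one]
          constructor
          · intro e; rw [e, ← mul_assoc, hm x]; group
          · intro e
            have : ev v s.reverse = (v x)⁻¹ * m * v x := by rw [← e]; group
            rw [this, mul_assoc, ← hm x]; group

theorem ev_cyc {iv : ℕ → ℕ} {v : ℕ → G} (h : ∀ x, v (iv x) = (v x)⁻¹) (m : G)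
    (hm : ∀ x, v x * m = m * v x) (t : List ℕ) :
    ev v (cyc iv t) = m ↔ ev v t = m := by
  rw [cyc, ev_strip h m hm, ev_red h]

theorem ev_rotl (v : ℕ → G) (m : G)
    (hm : ∀ x, v x * m = m * v x) (t : List ℕ) (k : ℕ) :
    ev v (rotl t k) = m ↔ ev v t = m := by
  conv_rhs => rw [← List.take_append_drop k t]
  rw [rotl, ev_append, ev_append]
  have hm := ev_comm hm (List.drop k t)
  revert hm
  generalize ev v (List.drop k t) = a
  generalize ev v (List.take k t) = b
  intro hm
  constructor
  · intro e
    have : b = a⁻¹ * m := by rw [← e]; group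
    rw [this, mul_assoc, ← hm]; group
  · intro e
    have : b = m * a⁻¹ := by rw [← e]; group
    rw [this, ← mul_assoc, hm]; group

theorem ev_reverse {v : ℕ → G} (h : ∀ x, v x = (v x)⁻¹) (t : List ℕ) :
    ev v t.reverse = (ev v t)⁻¹ := by
  induction t with
  | nil => simp [ev]
  | cons x t ih =>
    simp only [List.reverse_cons, ev_append, ih, ev, mul_one, mul_inv_rev]
    rw [← h x]

/-! ### The certificate checker -/

def ct (z u : G) (b : ℕ) : G := (if b.testBit 0 then z else 1) * (if b.testBit 1 then u else 1)

def getF : List (List ℕ × ℕ) → ℕ → List ℕ × ℕ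
  | [], _ => ([], 0)
  | f :: _, 0 => f
  | _ :: l, n + 1 => getF l n

def relW (w : List ℕ) (k rv : ℕ) : List ℕ :=
  bif Nat.beq rv 0 then rotl w k else (rotl w k).reverse

def runC (db : List (List ℕ × ℕ)) : List (ℕ × ℕ × ℕ × ℕ) → List ℕ → ℕ → List ℕ → ℕ → Bool
  | [], W, b, e, b' => (W == e) && Nat.beq b b'
  | (r, i, k, rv) :: ops, W, b, e, b' =>
    match getF db i with
    | (w, bw) => force (cyc id (relW w k rv ++ rotl W r)) fun W' =>
        runC db ops W' (Nat.xor b bw) e b'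

def runAll : List Cert → List (List ℕ × ℕ) → (List (List ℕ × ℕ) → Bool) → Bool
  | [], db, K => K db
  | (s, e, b, ops) :: cs, db, K =>
    runC db ops (cyc id s) 0 e b && (s.isEmpty || e.isEmpty) && runAll cs ((s ++ e, b) :: db) K

structure Setup (v : ℕ → G) (z u : G) : Prop where
  v2 : ∀ x, v x = (v x)⁻¹
  z2 : z * z = 1
  u2 : u * u = 1
  zc : ∀ x, v x * z = z * v x
  uc : ∀ x, v x * u = u * v x
  zu : u * z = z * u

def Valid (v : ℕ → G) (z u : G) (db : List (List ℕ × ℕ)) : Prop :=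
  ∀ f ∈ db, ev v f.1 = ct z u f.2

variable {v : ℕ → G} {z u : G}

theorem Setup.ctc (S : Setup v z u) (b x : ℕ) : v x * ct z u b = ct z u b * v x := by
  unfold ct
  split <;> split
  · rw [← mul_assoc, S.zc, mul_assoc, S.uc, mul_assoc]
  · rw [mul_one, S.zc]
  · rw [one_mul, S.uc]
  · simp

theorem Setup.ct_xor (S : Setup v z u) (b c : ℕ) :
    ct z u (Nat.xor b c) = ct z u b * ct z u c := by
  have hx : Nat.xor b c = b ^^^ c := rfl
  have h1 : z * u * z = u := by rw [mul_assoc, S.zu, ← mul_assoc, S.z2, one_mul]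
  have h2 : z * u * u = z := by rw [mul_assoc, S.u2, mul_one]
  unfold ct
  rw [hx, Nat.testBit_xor, Nat.testBit_xor]
  cases b.testBit 0 <;> cases b.testBit 1 <;> cases c.testBit 0 <;> cases c.testBit 1 <;>
    simp [S.z2, S.u2, S.zu, h1, h2, ← mul_assoc]

theorem Setup.ct_sq (S : Setup v z u) (b : ℕ) : ct z u b * ct z u b = 1 := by
  rw [← S.ct_xor]
  simp [ct]

theorem Setup.ct_comm (S : Setup v z u) (b c : ℕ) :
    ct z u b * ct z u c = ct z u c * ct z u b := by
  rw [← S.ct_xor, ← S.ct_xor]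
  exact congrArg _ (Nat.xor_comm b c)

theorem getF_valid {db : List (List ℕ × ℕ)} (h : Valid v z u db) (i : ℕ) :
    ev v (getF db i).1 = ct z u (getF db i).2 := by
  induction db generalizing i with
  | nil => simp [getF, ev, ct]
  | cons f l ih =>
    cases i with
    | zero => exact h f (by simp)
    | succ n => exact ih (fun f hf => h f (by simp [hf])) n

theorem relW_valid (S : Setup v z u) {w : List ℕ} {b : ℕ} (h : ev v w = ct z u b) (k rv : ℕ) :
    ev v (relW w k rv) = ct z u b := by
  have h1 : ev v (rotl w k) = ct z u b := (ev_rotl v _ (fun g => S.ctc b g) w k).2 h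
  unfold relW
  cases Nat.beq rv 0 with
  | true => simpa using h1
  | false =>
    simp only [cond_false, ev_reverse S.v2, h1]
    exact inv_eq_of_mul_eq_one_left (S.ct_sq b)

theorem runC_valid (S : Setup v z u) {db : List (List ℕ × ℕ)} (h : Valid v z u db)
    (ops : List (ℕ × ℕ × ℕ × ℕ)) (W : List ℕ) (b : ℕ) (e : List ℕ) (b' : ℕ)
    (hr : runC db ops W b e b' = true) (m : ℕ) :
    ev v W = ct z u m * ct z u b ↔ ev v e = ct z u m * ct z u b' := by
  induction ops generalizing W b with
  | nil =>
    simp only [runC, Bool.and_eq_true, beq_iff_eq] at hr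
    rw [hr.1, Nat.eq_of_beq_eq_true hr.2]
  | cons o ops ih =>
    obtain ⟨r, i, k, rv⟩ := o
    have hv := getF_valid h i
    rcases hf : getF db i with ⟨w, bw⟩
    rw [hf] at hv
    simp only [runC, hf, force_eq] at hr
    rw [← ih _ _ hr, S.ct_xor, ← mul_assoc, ← S.ct_xor m b, ← S.ct_xor _ bw]
    rw [ev_cyc (iv := id) (fun x => S.v2 x) _ (fun g => S.ctc _ g), ev_append, relW_valid S hv,
      ← ev_rotl v _ (fun g => S.ctc _ g) W r, S.ct_xor _ bw]
    constructor
    · intro e; rw [e, S.ct_comm]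
    · intro e
      rw [S.ct_comm _ bw] at e
      exact mul_left_cancel e

theorem runAll_valid (S : Setup v z u) (cs : List Cert) {db : List (List ℕ × ℕ)}
    (h : Valid v z u db) (K : List (List ℕ × ℕ) → Bool) (hr : runAll cs db K = true) :
    ∃ db', Valid v z u db' ∧ K db' = true := by
  induction cs generalizing db with
  | nil => exact ⟨db, h, hr⟩
  | cons c cs ih =>
    obtain ⟨s, e, b, ops⟩ := c
    simp only [runAll, Bool.and_eq_true, Bool.or_eq_true, List.isEmpty_iff] at hr
    obtain ⟨⟨h1, h2⟩, h3⟩ := hr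
    refine ih ?_ h3
    intro f hf
    rcases List.mem_cons.1 hf with rfl | hf
    · have c0 : ct z u 0 = 1 := by simp [ct]
      rcases h2 with rfl | rfl
      · have := runC_valid S h ops _ 0 e b h1 0
        simp only [c0, one_mul] at this
        simpa using this.1 (by simp [cyc, red, strip, ev])
      · have := runC_valid S h ops _ 0 [] b h1 b
        simp only [c0, mul_one, S.ct_sq, ev] at this
        simp only [List.append_nil]
        exact (ev_cyc (iv := id) (fun x => S.v2 x) _ (fun g => S.ctc _ g) s).1 (this.2 trivial)
    · exact h f hf

def inDB (db : List (List ℕ × ℕ)) (f : List ℕ × ℕ) : Bool :=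
  db.any fun g => Nat.beq g.2 f.2 && g.1 == f.1

theorem inDB_valid {db : List (List ℕ × ℕ)} (h : Valid v z u db) {f : List ℕ × ℕ}
    (hf : inDB db f = true) : ev v f.1 = ct z u f.2 := by
  simp only [inDB, List.any_eq_true, Bool.and_eq_true, beq_iff_eq] at hf
  obtain ⟨g, hg, h1, h2⟩ := hf
  rw [← h2, ← Nat.eq_of_beq_eq_true h1]
  exact h g hg

end eval
def atT : ℕ :=
  2652083221681338261311623392014929873391782489940172163569719652854394374792776511408081469364298385399593279883658444470917554807633992230391742367420084002328564978145375453322977317175350868987004007884132453584984229523961008817162339878262335015864163624200682123187328526260087966032551162514083955177703833162719159787228861960303108515232268310900154926096810750803142756166539449438379727604871457729908784916994457763956142321300196998258028934785563047427109918173682360909311017609610644966570359531855239486127003943118126831910860569797150648615425839764910452428006601258359954229538195267715478070001667214219597982726535830150905718758795016481739734174244981079241365599734043328759118736097939573614695370411212919123087537524020658316985481086543353934871022453951022758154081665257498528406527827544231688249147737536448938247283848882904590107669642157874430959869618598693082519693607748009440543933669395832159152271746896101704475372791625493873487483064739918655858485710943421321519786757956503956077451667011171974416755293011437025030045847491367921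175276181831094859520646225170453520939224682521163908351715341910301014883555181212763845006331135683113543272816349948966641088305607139389902037462440795627330559453239359618083170109762589690404979857158594295870623044800915429304632543510112966070032038897092246426044309857191602737

def labT : ℕ :=
  5344960750733825232295596421339818852400555049370305623826406086084676245126356125870764138790172183974260152644527342262034275650572874241880255379675717631430613373526029106560909431634560246718497696442013554942368880447416208749422498602386000924337214074455821984112353776057255332879364396698012733247500388331701755463980316869784174674438083331973469093756882279485951160043935068723941980144254109082035496164296350104595291671414783709781132983725203000562580931486669010006905096178593912465629937444967525345333652100932949066995413528029009291293799757733069311190493443647372293293684553696200148406669568012969849169825742340487344174651660394228717085852603298126549088253405942935400846549338768368806325565408116247511539918207242994384048872305791089056148221887372298695737687863799298237181088874670941212378934207774855047168012952863780377478340630757644441259530968835159603983855219630421659825562206103237140242599039918943033214782595724687408048954532389642612582291831783703256847382635734773694620110726469430979650137685906766469227071895027466184397504063402121681330132422411471724594186187498558421604264272105430219406621036738594474299230669674631300149227648332385689357839638322475234401873393244909865106002026759124096050184136918329320915899901093626473825442305820056956411122311206876045999142584027393051146246873544332015376783555206487523311622683705451777629852299206411770211605884488191199515113218622502215193603407977983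77515485281953943672154571041773260996235230017131448890025162148958689918554822583464729009156257056844980911538915216828444378196644566930234649040485025866944537188693566969151465567421573790350923001090036245760804313142845282834099640643257312992914843555653295922661634312916396653861526019964436300989921964641836351741631276657185266239675332112385135686633954197532460069633666127981226864520689184835619746617986386370950676221415319452022235961469741823804624509443080310629204754675997970351543493132512800212076892890298621755450886290916166009655880336164188447114172558826394774842334572679863724483452895654091091211413360617972889138778602992549659974156666964177393010682345584062299117340618737875699554666856677191178403980290237101293568498134784830508171052309500213895765164032

def rowT : ℕ :=
  5910706624350736863285450145376901879399703197300624998400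

def gensL : List ℕ := [102,170,179,180,186,200,214,221,229,249,254,278,292,338]

def sqL : List ℕ := [13,2,28,6,27,7,47,43,5,9,8,1,0,4]

def seqL : List ℕ :=
  [48, 62, 83, 47, 104, 97, 216, 82, 146, 125, 293, 41, 209, 251, 188, 328, 13, 96, 215, 279, 405,
   69, 124, 352, 244, 90, 277, 139, 160, 213, 461, 250, 187, 327, 76, 314, 230, 290, 128, 118, 181,
   349, 397, 228, 68, 123, 101, 307, 265, 167, 34, 276, 223, 159, 27, 356, 460, 318, 347, 326, 242,
   419, 75, 220, 403, 300, 286, 289, 174, 117, 437, 185, 20, 312, 202, 396, 321, 55, 227, 237, 370,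
   306, 264, 166, 153, 275, 272, 440, 417, 199, 447, 26, 454, 459, 346, 325, 468, 178, 258, 402,
   299, 285, 173, 363, 342, 433, 436, 111, 311, 395, 54, 236, 369, 165, 384, 152, 271, 416, 446,
   132, 503, 458, 467, 257, 401, 412, 284, 362, 432, 110, 391, 394, 195, 368, 164, 426, 270, 445,
   131, 502, 475, 466, 411, 482, 431, 335, 390, 194, 496, 425, 269, 377, 501, 465, 481, 334, 389,
   495, 376, 489, 500, 480, 388, 494, 499, 479, 493]

def srcI : List (ℕ × List ℕ) :=
  [(57, [0,6,0,6]), (89, [0,7,0,7]), (29, [0,8,0,8]), (97, [0,9,0,9]), (106, [0,11,0,11]),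
   (26, [0,12,0,12]), (82, [0,13,0,13]), (148, [2,1,2,1]), (173, [3,1,3,1]), (158, [5,1,5,1]),
   (20, [1,6,1,6]), (61, [1,8,1,8]), (21, [1,10,1,10]), (36, [2,3,2,3]), (58, [8,2,8,2]),
   (12, [2,11,2,11]), (54, [4,3,4,3]), (71, [5,3,5,3]), (78, [4,9,4,9]), (180, [4,10,4,10]),
   (88, [12,4,12,4]), (15, [4,13,4,13]), (3, [7,5,7,5]), (40, [5,8,5,8]), (210, [7,6,7,6]),
   (11, [6,12,6,12]), (16, [7,8,7,8]), (68, [7,9,7,9]), (64, [11,8,11,8]), (19, [11,9,11,9]),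
   (18, [13,10,13,10]), (131, [11,13,11,13]), (103, [13,12,13,12]), (190, [5,0,12,5,0,12]),
   (37, [8,0,12,8,0,12]), (69, [10,13,0,10,13,0]), (96, [6,1,3,6,1,3]), (50, [1,6,12,1,6,12]),
   (67, [8,1,10,8,1,10]), (142, [11,10,1,11,10,1]), (33, [1,10,13,1,10,13]), (25, [11,2,3,11,2,3]),
   (127, [4,2,11,4,2,11]), (138, [2,4,13,2,4,13]), (92, [2,8,7,2,8,7]), (183, [2,11,9,2,11,9]),
   (257, [2,11,10,2,11,10]), (110, [2,10,13,2,10,13]), (30, [13,4,3,13,4,3]), (187, [7,5,3,7,5,3]),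
   (124, [4,7,5,4,7,5]), (75, [4,12,6,4,12,6]), (120, [5,6,12,5,6,12]), (22, [5,7,9,5,7,9]),
   (85, [7,5,12,7,5,12]), (117, [10,6,12,10,6,12]), (99, [6,10,13,6,10,13]),
   (166, [1,6,0,8,1,6,0,8]), (243, [0,12,4,9,0,12,4,9]), (323, [0,9,4,13,0,9,4,13]),
   (177, [10,13,0,9,10,13,0,9]), (169, [1,10,4,3,1,10,4,3]), (155, [1,6,7,5,1,6,7,5]),
   (152, [1,6,7,8,1,6,7,8]), (222, [5,3,2,8,5,3,2,8]), (56, [11,2,3,5,11,2,3,5]),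
   (256, [2,8,7,6,2,8,7,6]), (204, [7,4,12,6,7,4,12,6]), (60, [6,12,4,9,6,12,4,9]),
   (316, [4,13,11,9,4,13,11,9]), (34, [5,7,9,11,5,7,9,11]), (141, [11,9,7,8,11,9,7,8]),
   (125, [10,1,8,0,12,10,1,8,0,12]), (232, [0,13,10,1,8,0,13,10,1,8]),
   (225, [0,13,10,2,8,0,13,10,2,8]), (231, [9,7,5,12,0,9,7,5,12,0]),
   (154, [1,10,11,2,3,1,10,11,2,3]), (288, [6,1,3,4,12,6,1,3,4,12]), (90, [13,4,3,1,6,13,4,3,1,6]),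
   (211, [5,3,2,11,10,5,3,2,11,10]), (86, [7,8,2,10,13,7,8,2,10,13]),
   (348, [4,3,5,6,12,4,3,5,6,12]), (100, [12,5,7,9,11,12,5,7,9,11]),
   (116, [13,11,9,7,5,13,11,9,7,5]), (407, [2,3,1,6,7,8,2,3,1,6,7,8]),
   (114, [12,6,5,3,2,11,12,6,5,3,2,11]), (201, [5,7,9,11,2,3,5,7,9,11,2,3]),
   (215, [10,13,0,9,4,12,6,10,13,0,9,4,12,6]), (135, [13,4,3,1,6,7,8,13,4,3,1,6,7,8]),
   (299, [6,1,3,4,13,11,9,6,1,3,4,13,11,9]), (268, [10,1,8,0,12,5,7,9,10,1,8,0,12,5,7,9]),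
   (193, [12,0,8,1,10,11,2,3,12,0,8,1,10,11,2,3]),
   (345, [9,0,13,10,2,8,7,6,1,3,9,0,13,10,2,8,7,6,1,3])]

def rootD : ℕ := 478

def rootW : List ℕ := [7,8,2,10,13,0,9,4,12,6,5,3,2,11,10,1,8,0,12,5,7,9,11,13,4,3,1,6]

def initW : List (List ℕ) := srcI.map Prod.snd ++ [rootW]

def certA : List Cert :=
  [([], [8,12,8,12], 0, [(0,34,0,0), (1,5,1,0), (1,2,1,0)]),
   ([], [10,0,10,0], 0, [(0,36,0,0), (1,7,1,1), (1,31,1,0)]),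
   ([], [6,3,6,3], 0, [(0,38,0,0), (1,10,1,1), (1,12,1,0)]),
   ([], [1,12,1,12], 0, [(0,40,0,0), (1,28,1,0), (1,13,1,1)]),
   ([], [8,10,8,10], 0, [(0,42,0,0), (1,16,1,0), (1,15,1,0)]),
   ([], [1,13,1,13], 0, [(0,45,0,0), (1,35,1,1), (1,17,1,1)]),
   ([], [2,7,2,7], 0, [(0,50,0,0), (1,32,1,1), (1,20,1,0)]),
   ([], [2,9,2,9], 0, [(0,52,0,0), (1,36,1,0), (1,22,1,1)]),
   ([], [13,3,13,3], 0, [(0,56,0,0), (1,24,1,0), (1,29,1,0)]),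
   ([], [7,3,7,3], 0, [(0,58,0,0), (1,26,1,0), (1,31,1,1)]),
   ([], [4,6,4,6], 0, [(0,61,0,0), (1,35,1,1), (1,30,1,0)]),
   ([], [5,9,5,9], 0, [(0,64,0,0), (1,38,1,0), (1,33,1,0)]),
   ([], [13,9,10,13,9,10], 0, [(0,72,0,0), (2,15,1,0), (1,10,1,1), (1,18,1,0)]),
   ([], [8,6,2,8,6,2], 0, [(0,79,0,0), (2,37,1,0), (1,6,1,1), (1,39,1,0)]),
   ([], [12,7,4,12,7,4], 0, [(0,81,0,0), (3,38,1,1), (1,3,1,1), (1,39,1,0)]),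
   ([], [12,9,6,12,9,6], 0, [(0,83,0,0), (2,33,1,0), (1,4,1,0), (1,35,1,1)]),
   ([], [6,5,6,0,5,0], 0, [(0,68,0,0), (2,49,2,1), (2,21,1,1), (1,41,1,1)]),
   ([], [1,0,12,10,1,0,12,10], 0, [(0,89,0,0), (2,19,1,1), (1,16,1,0), (1,12,1,0), (1,28,1,1)]),
   ([], [13,1,8,0,13,1,8,0], 0, [(0,91,0,0), (2,30,1,1), (1,13,1,1), (1,16,1,0), (1,48,1,1)]),
   ([], [8,13,2,0,2,8,0,13], 0, [(0,93,0,0), (0,25,0,1), (1,17,0,0), (7,33,0,0), (1,66,1,0), (8,14,0,0)]),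
   ([], [12,5,9,12,5,9], 0, [(0,95,0,0), (0,47,0,0), (6,74,0,1), (2,21,0,0), (0,23,0,1), (1,53,2,0)]),
   ([], [2,0,2,1,0,1], 0, [(0,2,0,0), (0,15,0,0), (3,27,0,1), (2,32,0,1), (4,1,2,0)]),
   ([], [13,8,13,6,8,6], 0, [(0,79,0,0), (0,32,0,1), (3,33,0,0), (2,22,0,0), (4,0,0,0), (0,2,2,1)]),
   ([], [0,2,0,6,2,6], 0, [(0,3,0,0), (4,37,0,0), (3,0,0,1), (1,9,0,1), (2,25,0,0)]),
   ([], [6,10,2,6,2,10], 0, [(0,6,0,0), (1,29,0,1), (1,22,0,0), (6,20,0,1), (1,36,0,1), (1,2,0,0), (1,0,0,1), (2,79,1,1), (1,49,0,0)]),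
   ([], [7,12,7,9,12,9], 0, [(0,4,0,0), (0,79,0,0), (6,13,1,0), (1,47,1,1)]),
   ([], [7,4,7,0,4,0], 0, [(0,84,0,0), (0,31,0,1), (2,44,0,1), (7,29,0,1), (6,0,0,0), (6,11,1,0)]),
   ([], [12,1,3,4,12,1,3,4], 0, [(0,104,0,0), (0,37,1,1), (1,24,1,0), (1,16,1,1), (1,52,1,0)]),
   ([], [4,1,6,13,4,1,6,13], 0, [(0,106,0,0), (2,36,1,0), (1,25,1,1), (1,19,1,1), (1,44,1,1)]),
   ([], [4,5,12,3,12,4,3,5], 0, [(0,110,0,0), (1,46,0,0), (1,26,0,0), (7,49,0,1), (1,81,2,1), (8,18,0,0)]),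
   ([], [5,4,5,1,4,1], 0, [(0,2,0,0), (0,26,0,0), (3,50,0,0), (2,38,0,0), (4,0,2,1)]),
   ([], [0,1,0,7,1,7], 0, [(0,94,0,0), (3,88,3,1), (3,33,1,1), (1,57,1,1), (2,55,1,1), (1,31,1,1)]),
   ([], [0,1,5,0,1,5], 0, [(0,94,0,0), (0,42,0,1), (2,54,0,1), (3,56,0,0), (1,15,0,1), (5,0,0,0)]),
   ([], [5,12,4,5,4,12], 0, [(0,18,0,0), (1,83,1,1), (8,53,1,1), (0,87,0,0)]),
   ([], [6,5,13,6,13,5], 0, [(0,5,0,0), (1,44,0,1), (1,28,0,1), (1,3,0,0), (4,55,0,0), (7,23,0,0), (6,0,2,1), (1,86,1,0), (0,59,0,1)]),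
   ([], [0,1,0,4,1,4], 0, [(0,6,0,0), (2,91,1,0), (7,56,1,1), (1,29,1,1), (1,65,1,0), (0,10,2,0), (4,45,0,1), (7,24,0,1), (6,11,0,0), (6,13,4,0)]),
   ([], [7,4,1,7,1,4], 0, [(0,6,0,0), (2,6,5,0), (1,53,1,1), (1,52,1,1), (1,53,1,1), (1,52,1,1), (1,5,0,1), (1,0,0,0), (0,4,0,1), (2,86,1,1), (1,58,0,0)]),
   ([], [0,5,4,0,4,5], 0, [(0,124,0,0), (2,40,0,1), (8,55,0,0), (1,21,2,0), (2,24,1,1), (1,35,0,1), (1,56,0,0), (1,92,1,0), (1,69,1,1), (1,42,1,1), (1,57,1,0), (1,62,1,1), (1,43,0,0), (1,58,0,0), (1,2,2,1), (4,26,0,1), (6,20,4,1), (0,37,0,1)]),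
   ([0,1,0,1,0,1,0,1], [], 0, [(0,6,0,1), (1,1,2,1), (2,2,4,0), (0,7,0,0), (1,88,1,0), (0,60,1,0)]),
   ([0,0,1,0,1,0,1,0,1,0], [], 0, [(1,7,0,1), (1,2,2,1), (2,3,4,0), (0,8,0,0), (1,89,1,0), (0,61,1,0)]),
   ([1,0,1,0,1,1,1,0,1,0], [], 0, [(1,8,0,1), (1,3,2,1), (2,4,4,0), (0,9,0,0), (1,90,1,0), (0,62,1,0)]),
   ([2,0,1,0,1,2,1,0,1,0], [], 0, [(4,48,1,1), (1,9,0,1), (2,34,0,0), (1,9,4,0), (1,34,1,1), (0,48,1,0)]),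
   ([3,0,1,0,1,3,1,0,1,0], [], 0, [(4,50,1,1), (1,10,0,1), (2,32,0,1), (1,10,4,0), (1,32,1,0), (0,50,1,0)]),
   ([4,0,1,0,1,4,1,0,1,0], [], 0, [(0,7,4,0), (5,11,0,1), (1,6,2,1), (2,12,0,0), (1,93,1,0), (0,65,1,0)]),
   ([5,0,1,0,1,5,1,0,1,0], [], 0, [(4,53,1,1), (0,11,2,1), (2,6,2,0), (2,8,4,0), (0,13,0,0), (3,17,0,0), (1,94,0,1), (0,66,1,1)]),
   ([6,0,1,0,1,6,1,0,1,0], [], 0, [(4,55,1,0), (3,45,1,0), (2,45,1,0), (0,55,1,1)]),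
   ([7,0,1,0,1,7,1,0,1,0], [], 0, [(9,47,1,0), (1,24,0,0), (2,39,0,1), (1,24,1,0), (1,39,1,0), (0,47,1,1)]),
   ([8,0,1,0,1,8,1,0,1,0], [], 0, [(4,58,1,0), (3,49,1,0), (2,49,1,0), (0,58,1,1)]),
   ([9,0,1,0,1,9,1,0,1,0], [], 0, [(9,51,1,0), (1,26,0,0), (2,40,0,1), (1,26,1,0), (1,40,1,0), (0,51,1,1)]),
   ([10,0,1,0,1,10,1,0,1,0], [], 0, [(4,61,1,0), (3,47,1,1), (2,47,1,1), (0,61,1,1)]),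
   ([11,0,1,0,1,11,1,0,1,0], [], 0, [(9,54,1,0), (1,28,0,0), (2,65,0,1), (1,28,1,0), (1,65,1,0), (0,54,1,1)]),
   ([12,0,1,0,1,12,1,0,1,0], [], 0, [(4,47,1,0), (3,56,1,0), (2,56,1,0), (0,47,1,1)]),
   ([13,0,1,0,1,13,1,0,1,0], [], 0, [(4,46,1,0), (3,58,1,0), (2,58,1,0), (0,46,1,1)])]

def certU : List Cert :=
  [([], [8,12,8,12], 0, [(0,35,0,0), (1,6,1,0), (1,3,1,0)]),
   ([], [10,0,10,0], 0, [(0,37,0,0), (1,8,1,1), (1,32,1,0)]),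
   ([], [6,3,6,3], 0, [(0,39,0,0), (1,11,1,1), (1,13,1,0)]),
   ([], [1,12,1,12], 0, [(0,41,0,0), (1,29,1,0), (1,14,1,1)]),
   ([], [8,10,8,10], 0, [(0,43,0,0), (1,17,1,0), (1,16,1,0)]),
   ([], [1,13,1,13], 0, [(0,46,0,0), (1,36,1,1), (1,18,1,1)]),
   ([], [11,3,11,3], 0, [(0,48,0,0), (1,20,1,0), (1,22,1,0)]),
   ([], [2,7,2,7], 0, [(0,52,0,0), (1,34,1,1), (1,22,1,0)]),
   ([], [2,9,2,9], 0, [(0,54,0,0), (1,38,1,0), (1,24,1,1)]),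
   ([], [13,3,13,3], 0, [(0,58,0,0), (1,26,1,0), (1,31,1,0)]),
   ([], [7,3,7,3], 0, [(0,60,0,0), (1,28,1,0), (1,33,1,1)]),
   ([], [4,6,4,6], 0, [(0,63,0,0), (1,37,1,1), (1,32,1,0)]),
   ([], [5,9,5,9], 0, [(0,66,0,0), (1,40,1,0), (1,35,1,0)]),
   ([], [6,8,6,8], 1, [(0,71,0,0), (0,24,1,0), (1,13,1,1), (1,25,1,0), (2,16,1,0), (1,14,1,0)]),
   ([], [13,9,10,13,9,10], 0, [(0,75,0,0), (2,18,1,0), (1,12,1,1), (1,21,1,0)]),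
   ([], [7,1,7,1], 1, [(0,79,0,0), (1,40,1,1), (1,1,1,0), (1,26,1,1), (2,27,1,1), (1,42,1,1)]),
   ([], [6,5,6,5], 1, [(0,79,0,0), (0,27,1,0), (1,0,1,1), (1,26,1,1), (2,39,1,0), (1,41,1,0)]),
   ([], [5,12,5,12], 1, [(0,70,0,0), (1,43,1,0), (1,0,1,0)]),
   ([], [0,5,0,5], 1, [(0,52,0,0), (2,0,1,1), (1,24,1,1)]),
   ([], [7,12,7,12], 1, [(0,74,0,0), (1,1,1,0), (1,42,1,1)]),
   ([], [2,5,11,2,5,11], 0, [(0,86,0,0), (2,38,1,1), (1,13,1,1), (1,34,1,1)]),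
   ([], [2,6,2,6], 1, [(0,88,0,0), (1,48,1,1), (1,7,1,1), (1,36,1,0), (1,46,1,0), (1,13,1,1)]),
   ([], [12,9,6,12,9,6], 0, [(0,91,0,0), (2,41,1,0), (1,10,1,0), (1,43,1,1)]),
   ([], [7,11,5,7,11,5], 0, [(0,94,0,0), (2,53,1,1), (1,10,1,1), (1,51,1,1)]),
   ([], [10,12,10,12], 1, [(0,97,0,0), (1,36,1,0), (1,24,1,1), (1,20,1,0), (1,37,1,0), (1,27,1,1), (1,23,1,0), (1,19,1,0), (1,30,1,0), (1,22,1,1)]),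
   ([], [6,10,6,10], 1, [(0,81,0,0), (2,0,1,1), (1,51,1,1)]),
   ([], [6,13,6,13], 1, [(0,83,0,0), (1,57,1,1), (1,0,1,1)]),
   ([], [13,8,13,8], 1, [(0,101,0,0), (0,34,1,0), (1,25,1,1), (1,27,1,0), (1,30,1,0), (2,40,1,1), (1,22,1,1), (1,58,1,1), (1,39,1,0), (1,21,1,0)]),
   ([], [0,2,0,2], 1, [(0,103,0,0), (4,31,1,1), (1,0,1,1), (1,23,1,0), (1,43,1,0), (1,35,0,1), (5,76,0,0), (1,26,1,0)]),
   ([], [12,9,12,9], 1, [(0,105,0,0), (1,52,1,0), (1,9,1,0), (1,31,1,1), (1,57,1,0), (1,11,1,0), (1,10,1,1), (1,16,1,0), (2,33,1,0), (1,35,1,0)]),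
   ([], [6,9,6,9], 1, [(0,7,0,0), (0,0,1,0), (1,56,1,1)]),
   ([], [4,0,4,0], 1, [(0,90,0,0), (1,52,1,0), (1,1,1,0), (1,37,1,1), (2,35,1,1), (1,50,1,1)]),
   ([], [9,13,9,13], 1, [(0,92,0,0), (0,36,1,0), (1,0,1,1), (1,39,1,0), (2,54,1,0), (1,51,1,0)]),
   ([], [10,9,10,9], 1, [(0,18,0,0), (0,0,1,1), (1,64,1,0)]),
   ([], [11,4,11,4], 1, [(0,104,0,0), (1,66,1,1), (1,1,1,1), (1,56,1,1), (2,53,1,1), (1,64,1,1)]),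
   ([], [2,4,2,4], 1, [(0,78,0,0), (2,0,1,0), (1,51,1,1)]),
   ([], [2,13,2,13], 1, [(0,80,0,0), (1,58,1,0), (1,0,1,1)]),
   ([], [10,2,10,2], 1, [(0,85,0,0), (2,0,1,1), (1,68,1,0)]),
   ([], [10,11,10,11], 1, [(0,85,0,0), (0,54,1,0), (1,0,1,1)]),
   ([], [11,1,11,1], 1, [(0,79,0,0), (1,52,1,1), (1,0,1,0)]),
   ([], [10,3,10,3], 1, [(0,117,0,0), (0,53,1,0), (1,0,1,1), (1,48,1,1), (1,49,1,1), (2,56,1,1), (1,33,1,0), (1,1,1,1), (1,54,1,0), (1,2,1,1)]),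
   ([], [4,1,4,1], 1, [(0,103,0,0), (1,61,1,1), (1,0,1,0), (1,54,1,1), (2,50,1,0), (1,58,1,1)]),
   ([], [3,12,3,12], 1, [(0,120,0,0), (0,53,1,1), (1,39,1,0), (1,30,1,1), (1,68,1,0), (1,51,1,1), (1,0,1,1), (1,38,1,0), (2,63,1,1), (1,59,1,0)]),
   ([], [7,10,13,7,10,13], 1, [(0,124,0,0), (1,58,1,0), (1,38,1,0), (1,15,1,1), (1,70,1,1), (1,5,1,1), (1,6,1,0), (1,35,1,0)]),
   ([], [3,8,3,8], 1, [(0,129,0,0), (0,58,1,0), (1,52,1,0), (1,22,1,0), (1,36,1,0), (1,59,1,1), (2,55,1,0), (1,28,1,1), (1,56,1,0), (1,53,1,1), (1,69,1,1), (1,30,1,0), (1,41,1,0), (1,71,1,0), (1,33,1,0)]),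
   ([], [2,5,2,5], 1, [(0,110,0,0), (1,59,1,1), (1,0,1,0), (1,63,1,1), (2,69,1,1), (1,60,1,0)]),
   ([], [11,5,11,5], 1, [(0,25,0,0), (0,0,1,0), (1,62,1,0)]),
   ([], [11,7,11,7], 1, [(0,23,0,0), (2,70,1,1), (1,0,1,1)]),
   ([], [9,8,9,8], 1, [(0,120,0,0), (0,78,1,0), (1,0,1,0), (1,77,1,0), (2,75,1,0), (1,76,1,0)]),
   ([], [9,3,9,3], 1, [(0,136,0,0), (0,72,1,1), (1,36,1,0), (1,2,1,1), (1,3,1,1), (1,67,1,0), (1,77,1,0), (1,1,1,1), (1,41,1,1), (1,38,1,0), (2,65,1,1), (1,42,1,0), (1,79,1,0), (1,63,1,0), (1,40,1,0)]),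
   ([], [0,1,3,9,0,1,3,9], 0, [(0,143,0,0), (4,65,1,1), (1,42,1,0), (1,28,1,0), (1,58,1,0), (1,64,1,0), (1,41,1,0), (1,21,1,1), (1,13,1,0), (1,12,1,1), (1,77,1,1), (1,36,1,1), (1,62,1,1), (1,5,1,1), (1,1,1,1), (1,53,1,1), (1,22,1,1), (1,45,1,0), (2,61,1,1), (1,47,1,0), (1,19,1,0), (1,51,1,1), (1,23,1,0), (1,24,1,0), (1,75,1,1), (0,34,0,1), (1,39,0,1), (1,78,0,1), (1,52,0,0), (1,6,1,0), (1,44,1,1), (1,40,1,0), (1,17,1,1), (1,57,1,1), (1,63,1,1), (1,9,1,0), (1,16,1,0), (1,48,1,0)]),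
   ([0,3,0,3,1,9,1,9], [], 0, [(3,60,0,1), (7,0,0,1), (0,1,0,1), (1,51,1,1), (0,55,1,0)]),
   ([0,3,0,3,9,1,9,1], [], 0, [(3,2,0,0), (1,0,3,1), (2,56,0,1), (2,56,1,0), (0,2,1,0)]),
   ([0,3,0,3,0,3,0,3], [], 0, [(0,1,0,1), (0,0,4,1)]), ([0,0,3,0,3,0,3,0,3,0], [], 0, [(0,0,0,0)]),
   ([1,0,3,0,3,1,3,0,3,0], [], 0, [(4,64,1,0), (3,55,1,0), (2,55,1,0), (0,64,1,1)]),
   ([2,0,3,0,3,2,3,0,3,0], [], 0, [(4,70,1,1), (3,27,1,0), (2,27,1,0), (0,70,1,0)]),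
   ([3,0,3,0,3,3,3,0,3,0], [], 0, [(0,3,0,0)]),
   ([4,0,3,0,3,4,3,0,3,0], [], 0, [(4,75,1,1), (3,26,1,1), (2,26,1,1), (0,75,1,0)]),
   ([5,0,3,0,3,5,3,0,3,0], [], 0, [(4,77,1,1), (3,40,1,0), (2,40,1,0), (0,77,1,0)]),
   ([6,0,3,0,3,6,3,0,3,0], [], 0, [(4,57,1,1), (3,61,1,0), (2,61,1,0), (0,57,1,0)]),
   ([7,0,3,0,3,7,3,0,3,0], [], 0, [(4,50,1,1), (3,63,1,0), (2,63,1,0), (0,50,1,0)]),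
   ([8,0,3,0,3,8,3,0,3,0], [], 0, [(4,17,1,0), (3,65,1,0), (2,65,1,0), (0,17,1,1)]),
   ([9,0,3,0,3,9,3,0,3,0], [], 0, [(4,13,1,1), (3,67,1,0), (2,67,1,0), (0,13,1,0)]),
   ([10,0,3,0,3,10,3,0,3,0], [], 0, [(4,23,1,1), (3,62,1,1), (2,62,1,1), (0,23,1,0)]),
   ([11,0,3,0,3,11,3,0,3,0], [], 0, [(4,58,1,1), (3,70,1,0), (2,70,1,0), (0,58,1,0)]),
   ([12,0,3,0,3,12,3,0,3,0], [], 0, [(4,23,1,0), (3,72,1,0), (2,72,1,0), (0,23,1,1)]),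
   ([13,0,3,0,3,13,3,0,3,0], [], 0, [(4,57,1,1), (3,74,1,0), (2,74,1,0), (0,57,1,0)])]

def certC : List Cert :=
  [([], [8,12,8,12], 0, [(0,36,0,0), (1,7,1,0), (1,4,1,0)]),
   ([], [10,0,10,0], 0, [(0,38,0,0), (1,9,1,1), (1,33,1,0)]),
   ([], [6,3,6,3], 0, [(0,40,0,0), (1,12,1,1), (1,14,1,0)]),
   ([], [1,12,1,12], 0, [(0,42,0,0), (1,30,1,0), (1,15,1,1)]),
   ([], [8,10,8,10], 0, [(0,44,0,0), (1,18,1,0), (1,17,1,0)]),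
   ([], [1,13,1,13], 0, [(0,47,0,0), (1,37,1,1), (1,19,1,1)]),
   ([], [11,3,11,3], 0, [(0,49,0,0), (1,21,1,0), (1,23,1,0)]),
   ([], [2,7,2,7], 0, [(0,53,0,0), (1,35,1,1), (1,23,1,0)]),
   ([], [2,9,2,9], 0, [(0,55,0,0), (1,39,1,0), (1,25,1,1)]),
   ([], [13,3,13,3], 0, [(0,59,0,0), (1,27,1,0), (1,32,1,0)]),
   ([], [7,3,7,3], 0, [(0,61,0,0), (1,29,1,0), (1,34,1,1)]),
   ([], [4,6,4,6], 0, [(0,64,0,0), (1,38,1,1), (1,33,1,0)]),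
   ([], [5,9,5,9], 0, [(0,67,0,0), (1,41,1,0), (1,36,1,0)]),
   ([], [6,8,6,8], 1, [(0,72,0,0), (0,25,1,0), (1,14,1,1), (1,26,1,0), (2,17,1,0), (1,15,1,0)]),
   ([], [13,9,10,13,9,10], 0, [(0,76,0,0), (2,19,1,0), (1,12,1,1), (1,22,1,0)]),
   ([], [7,1,7,1], 1, [(0,80,0,0), (1,41,1,1), (1,1,1,0), (1,27,1,1), (2,28,1,1), (1,43,1,1)]),
   ([], [6,5,6,5], 1, [(0,80,0,0), (0,28,1,0), (1,0,1,1), (1,27,1,1), (2,40,1,0), (1,42,1,0)]),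
   ([], [5,12,5,12], 1, [(0,71,0,0), (1,44,1,0), (1,0,1,0)]),
   ([], [0,5,0,5], 1, [(0,53,0,0), (2,0,1,1), (1,25,1,1)]),
   ([], [7,12,7,12], 1, [(0,75,0,0), (1,1,1,0), (1,43,1,1)]),
   ([], [2,5,11,2,5,11], 0, [(0,87,0,0), (2,39,1,1), (1,13,1,1), (1,35,1,1)]),
   ([], [2,6,2,6], 1, [(0,89,0,0), (1,49,1,1), (1,7,1,1), (1,37,1,0), (1,47,1,0), (1,13,1,1)]),
   ([], [4,7,4,7], 1, [(0,91,0,0), (2,49,1,1), (1,2,1,1), (1,44,1,0), (1,48,1,1), (1,10,1,1)]),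
   ([], [4,5,4,5], 1, [(0,75,0,0), (1,47,1,0), (1,0,1,1)]),
   ([], [12,9,6,12,9,6], 0, [(0,94,0,0), (2,44,1,0), (1,12,1,0), (1,46,1,1)]),
   ([], [7,11,5,7,11,5], 0, [(0,97,0,0), (2,56,1,1), (1,12,1,1), (1,54,1,1)]),
   ([], [10,12,10,12], 1, [(0,100,0,0), (1,39,1,0), (1,27,1,1), (1,22,1,0), (1,40,1,0), (1,30,1,1), (1,25,1,0), (1,21,1,0), (1,33,1,0), (1,24,1,1)]),
   ([], [6,10,6,10], 1, [(0,84,0,0), (2,0,1,1), (1,54,1,1)]),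
   ([], [6,13,6,13], 1, [(0,86,0,0), (1,60,1,1), (1,0,1,1)]),
   ([], [13,8,13,8], 1, [(0,104,0,0), (0,37,1,0), (1,27,1,1), (1,30,1,0), (1,33,1,0), (2,43,1,1), (1,24,1,1), (1,61,1,1), (1,42,1,0), (1,23,1,0)]),
   ([], [0,2,0,2], 1, [(0,106,0,0), (4,34,1,1), (1,0,1,1), (1,25,1,0), (1,46,1,0), (1,38,0,1), (5,79,0,0), (1,28,1,0)]),
   ([], [12,9,12,9], 1, [(0,108,0,0), (1,55,1,0), (1,11,1,0), (1,34,1,1), (1,60,1,0), (1,13,1,0), (1,12,1,1), (1,18,1,0), (2,36,1,0), (1,38,1,0)]),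
   ([], [6,9,6,9], 1, [(0,7,0,0), (0,0,1,0), (1,59,1,1)]),
   ([], [4,0,4,0], 1, [(0,93,0,0), (1,55,1,0), (1,1,1,0), (1,40,1,1), (2,38,1,1), (1,53,1,1)]),
   ([], [9,13,9,13], 1, [(0,95,0,0), (0,39,1,0), (1,0,1,1), (1,42,1,0), (2,57,1,0), (1,54,1,0)]),
   ([], [10,9,10,9], 1, [(0,20,0,0), (0,0,1,1), (1,67,1,0)]),
   ([], [11,4,11,4], 1, [(0,107,0,0), (1,69,1,1), (1,1,1,1), (1,59,1,1), (2,56,1,1), (1,67,1,1)]),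
   ([], [2,4,2,4], 1, [(0,81,0,0), (2,0,1,0), (1,54,1,1)]),
   ([], [2,13,2,13], 1, [(0,83,0,0), (1,61,1,0), (1,0,1,1)]),
   ([], [10,2,10,2], 1, [(0,88,0,0), (2,0,1,1), (1,71,1,0)]),
   ([], [10,11,10,11], 1, [(0,88,0,0), (0,57,1,0), (1,0,1,1)]),
   ([], [11,1,11,1], 1, [(0,82,0,0), (1,55,1,1), (1,0,1,0)]),
   ([], [10,3,10,3], 1, [(0,120,0,0), (0,56,1,0), (1,0,1,1), (1,51,1,1), (1,52,1,1), (2,59,1,1), (1,35,1,0), (1,1,1,1), (1,57,1,0), (1,2,1,1)]),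
   ([], [4,1,4,1], 1, [(0,106,0,0), (1,64,1,1), (1,0,1,0), (1,57,1,1), (2,53,1,0), (1,61,1,1)]),
   ([], [3,12,3,12], 1, [(0,123,0,0), (0,56,1,1), (1,41,1,0), (1,32,1,1), (1,71,1,0), (1,54,1,1), (1,0,1,1), (1,40,1,0), (2,66,1,1), (1,62,1,0)]),
   ([], [10,5,10,5], 1, [(0,126,0,0), (1,60,1,1), (1,38,1,1), (1,2,1,1), (1,64,1,1), (0,24,2,0), (6,4,0,0), (5,5,1,1)]),
   ([], [7,10,13,7,10,13], 1, [(0,128,0,0), (1,62,1,0), (1,41,1,0), (1,16,1,1), (1,74,1,1), (1,6,1,1), (1,7,1,0), (1,38,1,0)]),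
   ([], [12,11,12,11], 1, [(0,131,0,0), (3,78,1,1), (1,15,1,1), (1,34,1,1), (1,76,1,1), (2,29,0,0), (5,21,2,1), (1,27,1,0)]),
   ([], [13,7,5,13,5,7], 1, [(0,133,0,0), (2,77,1,1), (1,35,1,1), (1,13,1,0), (1,79,1,1), (0,22,2,0), (2,81,0,1)]),
   ([], [3,8,3,8], 1, [(0,135,0,0), (0,64,1,0), (1,58,1,0), (1,27,1,0), (1,41,1,0), (1,65,1,1), (2,61,1,0), (1,33,1,1), (1,62,1,0), (1,59,1,1), (1,75,1,1), (1,35,1,0), (1,46,1,0), (1,77,1,0), (1,38,1,0)]),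
   ([], [2,5,2,5], 1, [(0,116,0,0), (1,65,1,1), (1,0,1,0), (1,69,1,1), (2,75,1,1), (1,66,1,0)]),
   ([], [11,5,11,5], 1, [(0,30,0,0), (0,0,1,0), (1,68,1,0)]),
   ([], [11,7,11,7], 1, [(0,26,0,0), (2,76,1,1), (1,0,1,1)]),
   ([], [9,8,9,8], 1, [(0,126,0,0), (0,84,1,0), (1,0,1,0), (1,83,1,0), (2,81,1,0), (1,82,1,0)]),
   ([], [6,2,11,12,6,2,11,12], 1, [(0,141,0,0), (2,73,1,0), (1,3,1,1), (1,2,1,1), (1,36,1,0), (1,37,1,1), (1,69,1,1), (1,47,1,1), (1,9,1,0), (1,51,1,1)]),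
   ([], [9,3,9,3], 1, [(0,143,0,0), (0,79,1,1), (1,42,1,0), (1,3,1,1), (1,4,1,1), (1,74,1,0), (1,84,1,0), (1,2,1,1), (1,47,1,1), (1,44,1,0), (2,72,1,1), (1,48,1,0), (1,86,1,0), (1,70,1,0), (1,46,1,0)]),
   ([], [4,7,8,13,4,7,8,13], 1, [(0,146,0,0), (2,66,1,0), (1,53,1,1), (1,45,1,1), (1,6,1,0), (1,46,1,1), (1,74,1,1), (1,68,1,0), (1,40,1,1), (1,69,1,0), (1,50,1,0), (1,12,1,1), (1,82,1,1), (1,42,1,0), (1,27,1,0), (1,44,1,1)]),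
   ([], [1,11,9,6,1,11,9,6], 1, [(0,148,0,0), (2,75,1,1), (1,47,1,1), (1,50,1,1), (1,1,1,1), (1,54,1,1), (1,67,1,0), (1,80,1,0), (1,20,1,1), (1,77,1,0), (1,45,1,0), (1,13,1,0), (1,90,1,1), (1,22,1,1), (1,28,1,1), (1,51,1,1)]),
   ([], [1,7,9,10,1,7,9,10], 0, [(0,150,0,0), (2,62,1,1), (1,57,1,0), (1,83,1,1), (1,86,1,1), (1,4,1,1), (1,53,1,0), (1,71,1,1), (1,65,1,0), (1,39,1,0), (1,61,1,0), (1,63,1,0), (1,56,1,1), (1,59,1,0), (1,40,1,1), (1,38,1,1), (1,26,1,0), (1,31,1,1), (1,54,1,1), (1,82,1,1), (1,45,1,0), (1,12,1,1), (1,69,1,0)]),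
   ([], [2,12,2,12], 2, [(0,152,0,0), (1,63,1,0), (1,60,1,0), (1,57,1,1), (1,65,1,0), (1,28,1,0), (1,59,1,0), (1,66,1,0), (1,72,1,1), (1,54,1,0), (1,89,1,1), (1,75,1,0), (1,9,1,1), (1,58,1,0), (1,73,1,0), (1,17,1,1), (1,68,1,1), (1,69,1,1), (1,55,1,0), (1,18,1,0), (1,19,1,0), (1,16,1,0), (1,32,1,0), (1,76,1,1), (1,52,1,0), (1,11,1,1), (2,14,1,0), (1,74,1,1)]),
   ([], [11,6,11,6], 3, [(0,5,0,0), (1,77,1,0), (1,0,1,0), (1,38,1,0), (2,87,1,1), (1,12,1,0)]),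
   ([], [9,1,9,1], 2, [(0,3,0,0), (1,92,1,0), (1,0,1,0), (1,19,1,0), (2,73,1,1), (1,28,1,0)]),
   ([], [7,10,7,10], 2, [(0,3,0,0), (0,46,1,1), (1,0,1,1), (1,76,1,0), (2,26,1,1), (1,91,1,1)]),
   ([], [7,13,7,13], 3, [(0,16,0,0), (1,95,1,1), (1,0,1,1)]),
   ([], [13,5,13,5], 2, [(0,15,0,0), (5,0,1,0)]),
   ([], [8,4,8,4], 2, [(0,8,0,0), (1,93,1,0), (1,1,1,0), (1,42,1,1), (2,88,1,1), (1,35,1,0)]),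
   ([], [], 2, [(0,161,0,0), (20,95,1,0), (1,13,1,1), (1,2,1,0), (1,43,1,1), (1,55,1,0), (1,50,1,0), (1,92,1,0), (13,25,1,1), (1,24,1,0), (1,96,1,0), (1,72,1,1), (1,18,1,1), (1,14,1,0), (1,97,1,0), (1,89,1,1), (1,56,1,0), (1,60,1,1), (1,37,1,1), (1,36,1,0), (1,27,1,1), (1,98,1,0), (6,85,1,0), (1,15,1,1), (1,20,1,1), (1,77,1,0), (1,91,1,0), (1,47,1,1), (1,48,1,0), (17,79,1,0), (1,67,1,1), (1,62,1,0), (1,4,1,1), (1,22,1,1), (1,76,1,1), (8,93,1,1), (1,21,1,1), (1,6,1,1), (1,39,1,1), (1,65,1,1), (1,73,1,1), (15,70,1,1), (1,12,1,1), (1,0,1,0), (1,16,1,1), (1,52,1,1), (0,44,1,1), (1,38,1,0), (1,68,1,1), (1,33,1,0), (1,54,1,1), (0,84,1,0), (1,28,1,1), (1,87,1,0), (1,32,1,0), (1,86,1,0), (0,10,1,0), (1,57,1,1), (1,30,1,1), (1,71,1,1), (0,66,1,0), (1,35,1,0), (1,64,1,1), (0,23,1,0), (1,26,1,0), (0,8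1,1,0)]),
   ([0,1,0,1], [], 1, [(0,68,1,0)]), ([0,2,0,2], [], 1, [(0,37,1,0)]),
   ([0,3,0,3], [], 2, [(0,69,1,0)]), ([0,4,0,4], [], 1, [(0,36,1,1)]),
   ([0,5,0,5], [], 1, [(0,52,1,0)]), ([0,6,0,6], [], 0, [(0,74,1,0)]),
   ([0,7,0,7], [], 0, [(0,76,1,0)]), ([0,8,0,8], [], 0, [(0,78,1,0)]),
   ([0,9,0,9], [], 0, [(0,80,1,0)]), ([0,10,0,10], [], 0, [(0,74,1,1)]),
   ([0,11,0,11], [], 0, [(0,83,1,0)]), ([0,12,0,12], [], 0, [(0,85,1,0)]),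
   ([0,13,0,13], [], 0, [(0,87,1,0)]), ([1,2,1,2], [], 0, [(0,89,1,1)]),
   ([1,3,1,3], [], 0, [(0,91,1,1)]), ([1,4,1,4], [], 1, [(0,38,1,1)]),
   ([1,5,1,5], [], 0, [(0,94,1,1)]), ([1,6,1,6], [], 0, [(0,96,1,0)]),
   ([1,7,1,7], [], 1, [(0,69,1,1)]), ([1,8,1,8], [], 0, [(0,99,1,0)]),
   ([1,9,1,9], [], 2, [(0,25,1,1)]), ([1,10,1,10], [], 0, [(0,102,1,0)]),
   ([1,11,1,11], [], 1, [(0,47,1,1)]), ([1,12,1,12], [], 0, [(0,86,1,0)]),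
   ([1,13,1,13], [], 0, [(0,85,1,0)]), ([2,3,2,3], [], 0, [(0,107,1,0)]),
   ([2,4,2,4], [], 1, [(0,55,1,0)]), ([2,5,2,5], [], 1, [(0,43,1,0)]),
   ([2,6,2,6], [], 1, [(0,73,1,0)]), ([2,7,2,7], [], 0, [(0,88,1,0)]),
   ([2,8,2,8], [], 0, [(0,113,1,1)]), ([2,9,2,9], [], 0, [(0,89,1,0)]),
   ([2,10,2,10], [], 1, [(0,59,1,1)]), ([2,11,2,11], [], 0, [(0,117,1,0)]),
   ([2,12,2,12], [], 2, [(0,41,1,0)]), ([2,13,2,13], [], 1, [(0,63,1,0)]),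
   ([3,4,3,4], [], 0, [(0,121,1,1)]), ([3,5,3,5], [], 0, [(0,123,1,1)]),
   ([3,6,3,6], [], 0, [(0,102,1,1)]), ([3,7,3,7], [], 0, [(0,95,1,1)]),
   ([3,8,3,8], [], 1, [(0,57,1,0)]), ([3,9,3,9], [], 1, [(0,52,1,1)]),
   ([3,10,3,10], [], 1, [(0,66,1,1)]), ([3,11,3,11], [], 0, [(0,103,1,1)]),
   ([3,12,3,12], [], 1, [(0,66,1,0)]), ([3,13,3,13], [], 0, [(0,102,1,1)]),
   ([4,5,4,5], [], 1, [(0,89,1,0)]), ([4,6,4,6], [], 0, [(0,102,1,0)]),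
   ([4,7,4,7], [], 1, [(0,92,1,0)]), ([4,8,4,8], [], 2, [(0,50,1,1)]),
   ([4,9,4,9], [], 0, [(0,137,1,0)]), ([4,10,4,10], [], 0, [(0,139,1,0)]),
   ([4,11,4,11], [], 1, [(0,82,1,1)]), ([4,12,4,12], [], 0, [(0,142,1,1)]),
   ([4,13,4,13], [], 0, [(0,144,1,0)]), ([5,6,5,6], [], 1, [(0,105,1,1)]),
   ([5,7,5,7], [], 0, [(0,147,1,1)]), ([5,8,5,8], [], 0, [(0,149,1,0)]),
   ([5,9,5,9], [], 0, [(0,112,1,0)]), ([5,10,5,10], [], 1, [(0,80,1,1)]),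
   ([5,11,5,11], [], 1, [(0,75,1,1)]), ([5,12,5,12], [], 1, [(0,110,1,0)]),
   ([5,13,5,13], [], 2, [(0,64,1,1)]), ([6,7,6,7], [], 0, [(0,156,1,1)]),
   ([6,8,6,8], [], 1, [(0,117,1,0)]), ([6,9,6,9], [], 1, [(0,99,1,0)]),
   ([6,10,6,10], [], 1, [(0,105,1,0)]), ([6,11,6,11], [], 3, [(0,73,1,1)]),
   ([6,12,6,12], [], 0, [(0,162,1,0)]), ([6,13,6,13], [], 1, [(0,107,1,0)]),
   ([7,8,7,8], [], 0, [(0,165,1,0)]), ([7,9,7,9], [], 0, [(0,167,1,0)]),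
   ([7,10,7,10], [], 2, [(0,76,1,0)]), ([7,11,7,11], [], 1, [(0,87,1,1)]),
   ([7,12,7,12], [], 1, [(0,121,1,0)]), ([7,13,7,13], [], 3, [(0,78,1,0)]),
   ([8,9,8,9], [], 1, [(0,89,1,1)]), ([8,10,8,10], [], 0, [(0,139,1,0)]),
   ([8,11,8,11], [], 0, [(0,175,1,1)]), ([8,12,8,12], [], 0, [(0,145,1,0)]),
   ([8,13,8,13], [], 1, [(0,117,1,1)]), ([9,10,9,10], [], 1, [(0,112,1,1)]),
   ([9,11,9,11], [], 0, [(0,180,1,1)]), ([9,12,9,12], [], 1, [(0,118,1,1)]),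
   ([9,13,9,13], [], 1, [(0,116,1,0)]), ([10,11,10,11], [], 1, [(0,111,1,0)]),
   ([10,12,10,12], [], 1, [(0,126,1,0)]), ([10,13,10,13], [], 0, [(0,186,1,1)]),
   ([11,12,11,12], [], 1, [(0,107,1,1)]), ([11,13,11,13], [], 0, [(0,189,1,0)]),
   ([12,13,12,13], [], 0, [(0,191,1,1)])]
def goalA (db : List (List ℕ × ℕ)) : Bool :=
  inDB db ([0, 1, 0, 1, 0, 1, 0, 1], 0) &&
    (List.range 14).all fun y => inDB db ([y, 0, 1, 0, 1, y, 1, 0, 1, 0], 0)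

def goalU (db : List (List ℕ × ℕ)) : Bool :=
  inDB db ([0, 3, 0, 3, 0, 3, 0, 3], 0) &&
    (List.range 14).all fun y => inDB db ([y, 0, 3, 0, 3, y, 3, 0, 3, 0], 0)

def goalC (db : List (List ℕ × ℕ)) : Bool :=
  inDB db ([], 2) && (List.range 14).all fun i => (List.range i).all fun j =>
    inDB db ([j, i, j, i], 0) || inDB db ([j, i, j, i], 1) ||
    inDB db ([j, i, j, i], 2) || inDB db ([j, i, j, i], 3)

def db0 : List (List ℕ × ℕ) := initW.map fun w => (w, 0)

theorem checkA : runAll certA db0 goalA = true := by decide +kernel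
theorem checkU : runAll certU (([0, 1, 0, 1], 1) :: db0) goalU = true := by decide +kernel
theorem checkC : runAll certC (([0, 3, 0, 3], 2) :: ([0, 1, 0, 1], 1) :: db0) goalC = true := by
  decide +kernel
/-! ### The action on the 504 flags of the Fricke–Macbeath map -/

def atf (i : ℕ) : ℕ := Nat.land (Nat.shiftRight atT (9 * i)) 511
def cs (m i : ℕ) : ℕ := i - i % 7 + (i % 7 + m) % 7
def btf (i : ℕ) : ℕ := cs 6 (atf i)

def sm (i : ℕ) : ℕ := cs 1 (btf (btf i))
def smb (i : ℕ) : ℕ := cs 4 (btf (btf (sm i)))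
def se (i : ℕ) : ℕ := cs 4 (btf (smb i))
def sd (i : ℕ) : List ℕ := [i, btf i, sm i, btf (sm i), smb i]

def atCheck : Bool :=
  ((List.range 504).all fun i => Nat.blt (atf i) 504 && Nat.beq (atf (atf i)) i &&
    Nat.beq (btf (btf (btf i))) i) &&
  (List.range 71).all fun v => Nat.blt (atf (7 * (v + 1)) / 7) (v + 1)

theorem atCheck_ok : atCheck = true := by decide +kernel

theorem blt_iff (m n : ℕ) : Nat.blt m n = true ↔ m < n := by
  simp only [Nat.blt, Nat.ble_eq]; omega

theorem beq_iff (m n : ℕ) : Nat.beq m n = true ↔ m = n := by rw [Nat.beq_eq]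

theorem atf_lt {i : ℕ} (h : i < 504) : atf i < 504 := by
  have := atCheck_ok
  simp only [atCheck, Bool.and_eq_true, List.all_eq_true, List.mem_range, beq_iff, blt_iff] at this
  exact (this.1 i h).1.1

theorem atf_atf {i : ℕ} (h : i < 504) : atf (atf i) = i := by
  have := atCheck_ok
  simp only [atCheck, Bool.and_eq_true, List.all_eq_true, List.mem_range, beq_iff, blt_iff] at this
  exact (this.1 i h).1.2

theorem btf3 {i : ℕ} (h : i < 504) : btf (btf (btf i)) = i := by
  have := atCheck_ok
  simp only [atCheck, Bool.and_eq_true, List.all_eq_true, List.mem_range, beq_iff, blt_iff] at this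
  exact (this.1 i h).2

theorem atf_tree {v : ℕ} (h : v < 71) : atf (7 * (v + 1)) / 7 < v + 1 := by
  have := atCheck_ok
  simp only [atCheck, Bool.and_eq_true, List.all_eq_true, List.mem_range, beq_iff, blt_iff] at this
  exact this.2 v h

theorem cs_div (m i : ℕ) : cs m i / 7 = i / 7 := by unfold cs; omega
theorem cs_mod (m i : ℕ) : cs m i % 7 = (i % 7 + m) % 7 := by unfold cs; omega
theorem cs_lt {m i : ℕ} (h : i < 504) : cs m i < 504 := by unfold cs; omega
theorem btf_lt {i : ℕ} (h : i < 504) : btf i < 504 := cs_lt (atf_lt h)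

/-! ### Signed words for the edges -/

def sx (x : ℕ) : ℕ := bif Nat.beq (x % 2) 0 then x + 1 else x - 1

def forceN {α : Type} : ℕ → (ℕ → α) → α
  | 0, k => k 0
  | n + 1, k => k (n + 1)

theorem forceN_eq {α : Type} (n : ℕ) (k : ℕ → α) : forceN n k = k n := by
  cases n <;> rfl

def force2 {α : Type} : List ℕ → (List ℕ → α) → α
  | [], k => k []
  | x :: t, k => force2 t (fun t' => forceN x (fun x' => k (x' :: t')))

theorem force2_eq {α : Type} (l : List ℕ) (k : List ℕ → α) : force2 l k = k l := by
  induction l generalizing k with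
  | nil => rfl
  | cons x t ih => simp [force2, ih, forceN_eq]

def invw (w : List ℕ) : List ℕ := (w.map sx).reverse

def look : List (ℕ × List ℕ) → ℕ → Option (List ℕ)
  | [], _ => none
  | (e, w) :: t, d => bif Nat.beq e d then some w else look t d

def wordOf (t : List (ℕ × List ℕ)) : List ℕ → Option (List ℕ)
  | [] => some []
  | d :: ds =>
    match look t d with
    | none => none
    | some w =>
      match wordOf t ds with
      | none => none
      | some w' => some (w ++ w')

def build : List ℕ → List (ℕ × List ℕ) → Option (List (ℕ × List ℕ))
  | [], t => some t
  | d :: s, t =>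
    match wordOf t [btf d, btf (btf d)] with
    | none => none
    | some x => force2 (red sx x) fun w => force2 (invw w) fun w' =>
        forceN (atf d) fun e =>
        bif Nat.blt d 504 then build s ((d, w') :: (e, w) :: t) else none

def gen (i : ℕ) : ℕ := gensL.getD i 0

def tab0 : List (ℕ × List ℕ) :=
  (List.range 71).map (fun v => (7 * (v + 1), [])) ++
  (List.range 71).map (fun v => (atf (7 * (v + 1)), [])) ++
  (List.range 14).map (fun i => (gen i, [2 * i])) ++
  (List.range 14).map (fun i => (atf (gen i), [2 * i + 1]))

def half (w : List ℕ) : List ℕ := w.map (fun x => x / 2)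

def tabCheck1 (t : List (ℕ × List ℕ)) : Bool :=
  (List.range 504).all fun i => (look t i).isSome

def tabCheck2 (t : List (ℕ × List ℕ)) : Bool :=
  (List.range 14).all fun i => forceN (sqL.getD i 0) fun s => Nat.beq (se (se s)) s &&
    match wordOf t (sd s ++ sd (se s)) with
    | none => false
    | some w => cyc sx (w ++ w) == [2 * i, 2 * i] || cyc sx (w ++ w) == [2 * i + 1, 2 * i + 1]

def tabCheck3 (t : List (ℕ × List ℕ)) : Bool :=
  srcI.all fun p => Nat.beq (se (se p.1)) p.1 &&
    match wordOf t (sd p.1 ++ sd (se p.1)) with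
    | none => false
    | some w => cyc id (half (w ++ w)) == p.2

def tabCheck4 (t : List (ℕ × List ℕ)) : Bool :=
  Nat.blt rootD 504 &&
    match wordOf t [rootD, btf rootD, btf (btf rootD)] with
    | none => false
    | some w => cyc id (half w) == rootW

def tabCheck : Bool :=
  ((List.range 14).all fun i => Nat.blt (gen i) 504) &&
  match build seqL tab0 with
  | none => false
  | some t => tabCheck1 t && tabCheck2 t && tabCheck3 t && tabCheck4 t

theorem tabCheck_ok : tabCheck = true := by decide +kernel
/-! ### Soundness of the tables in an arbitrary quotient -/

structure Rel {G : Type*} [Group G] (a b c : G) : Prop where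
  a2 : a * a = 1
  c7 : c ^ 7 = 1
  hb : b = a * c⁻¹
  b3 : b * b * b = 1
  s4 : (b ^ 2 * c * b ^ 2 * c ^ 4 * b * c ^ 4) ^ 4 = 1

section upper
variable {G : Type*} [Group G] (a c : G)

def rv (v : ℕ) : G :=
  if h : atf (7 * v) / 7 < v then rv (atf (7 * v) / 7) * c ^ (atf (7 * v) % 7) * a else 1
termination_by v
decreasing_by exact h

def rr (n : ℕ) : G := rv a c (n / 7) * c ^ (n % 7)

def eps (n : ℕ) : G := rr a c n * a * (rr a c (atf n))⁻¹

def sv (m : ℕ) : G :=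
  if m / 2 < 14 then (if m % 2 = 0 then eps a c (gen (m / 2)) else (eps a c (gen (m / 2)))⁻¹)
  else 1

theorem sv_sx (m : ℕ) : sv a c (sx m) = (sv a c m)⁻¹ := by
  rcases Nat.mod_two_eq_zero_or_one m with h | h
  · have h1 : sx m = m + 1 := by simp [sx, h]
    have h2 : (m + 1) / 2 = m / 2 := by omega
    have h3 : (m + 1) % 2 = 1 := by omega
    rw [h1, sv, sv, h2, h3, h]
    split <;> simp
  · have h1 : sx m = m - 1 := by rw [sx, h]; rfl
    have h2 : (m - 1) / 2 = m / 2 := by omega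
    have h3 : (m - 1) % 2 = 0 := by omega
    rw [h1, sv, sv, h2, h3, h]
    split <;> simp

theorem ev_invw (w : List ℕ) : ev (sv a c) (invw w) = (ev (sv a c) w)⁻¹ := by
  induction w with
  | nil => simp [invw, ev]
  | cons x t ih =>
    simp only [invw] at ih
    simp [invw, ev_append, ih, ev, sv_sx]

variable {a c} {b : G}

theorem rr_cs (R : Rel a b c) (m n : ℕ) : rr a c (cs m n) = rr a c n * c ^ m := by
  rw [rr, rr, cs_div, cs_mod, mul_assoc, ← pow_add, ← pow_eq_pow_mod _ R.c7]

theorem rr_a (n : ℕ) : rr a c n * a = eps a c n * rr a c (atf n) := by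
  simp [eps]

theorem rr_b (R : Rel a b c) (n : ℕ) : rr a c n * b = eps a c n * rr a c (btf n) := by
  have h : c⁻¹ = c ^ 6 := by
    rw [inv_eq_iff_mul_eq_one, ← pow_succ']; exact R.c7
  rw [btf, rr_cs R, R.hb, ← mul_assoc, rr_a, h, mul_assoc]

theorem eps_at (R : Rel a b c) {n : ℕ} (h : n < 504) : eps a c (atf n) = (eps a c n)⁻¹ := by
  have : a⁻¹ = a := inv_eq_of_mul_eq_one_left R.a2
  rw [eps, eps, atf_atf h]
  simp [this, mul_assoc]

theorem eps_tree (R : Rel a b c) {v : ℕ} (h : v < 71) : eps a c (7 * (v + 1)) = 1 := by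
  have h1 : rr a c (7 * (v + 1)) = rr a c (atf (7 * (v + 1))) * a := by
    rw [rr, rr]
    have e1 : 7 * (v + 1) / 7 = v + 1 := by omega
    have e2 : 7 * (v + 1) % 7 = 0 := by omega
    rw [e1, e2, rv, dif_pos (atf_tree h)]
    simp
  rw [eps, h1, mul_assoc _ a a, R.a2]
  simp

theorem eps_tri (R : Rel a b c) {n : ℕ} (h : n < 504) :
    eps a c n * eps a c (btf n) * eps a c (btf (btf n)) = 1 := by
  have h1 : rr a c n * (b * b * b) =
      eps a c n * eps a c (btf n) * eps a c (btf (btf n)) * rr a c n := by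
    have e1 := rr_b R n
    have e2 := rr_b R (btf n)
    have e3 := rr_b R (btf (btf n))
    rw [btf3 h] at e3
    calc rr a c n * (b * b * b) = rr a c n * b * b * b := by simp only [mul_assoc]
      _ = eps a c n * (rr a c (btf n) * b) * b := by rw [e1]; simp only [mul_assoc]
      _ = eps a c n * eps a c (btf n) * (rr a c (btf (btf n)) * b) := by
          rw [e2]; simp only [mul_assoc]
      _ = _ := by rw [e3]; simp only [mul_assoc]
  rw [R.b3, mul_one] at h1
  exact (mul_eq_right.1 h1.symm)

def dprod (a c : G) (ds : List ℕ) : G := ev (eps a c) ds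

theorem rr_S (R : Rel a b c) (n : ℕ) :
    rr a c n * (b ^ 2 * c * b ^ 2 * c ^ 4 * b * c ^ 4) = ev (eps a c) (sd n) * rr a c (se n) := by
  have hB := rr_b R
  have e1 : rr a c n * b ^ 2 * c = eps a c n * eps a c (btf n) * rr a c (sm n) := by
    rw [sm, rr_cs R, pow_two, ← mul_assoc, hB, mul_assoc _ _ b, hB]
    simp only [mul_assoc, pow_one]
  have e2 : rr a c (sm n) * b ^ 2 * c ^ 4 =
      eps a c (sm n) * eps a c (btf (sm n)) * rr a c (smb n) := by
    rw [smb, rr_cs R, pow_two, ← mul_assoc, hB, mul_assoc _ _ b, hB]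
    simp only [mul_assoc]
  have e3 : rr a c (smb n) * b * c ^ 4 = eps a c (smb n) * rr a c (se n) := by
    rw [se, rr_cs R, hB, mul_assoc]
  calc rr a c n * (b ^ 2 * c * b ^ 2 * c ^ 4 * b * c ^ 4)
      = (rr a c n * b ^ 2 * c) * b ^ 2 * c ^ 4 * b * c ^ 4 := by simp only [mul_assoc]
    _ = eps a c n * eps a c (btf n) * (rr a c (sm n) * b ^ 2 * c ^ 4) * b * c ^ 4 := by
        rw [e1]; simp only [mul_assoc]
    _ = eps a c n * eps a c (btf n) * (eps a c (sm n) * eps a c (btf (sm n)) *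
          (rr a c (smb n) * b * c ^ 4)) := by
        rw [e2]; simp only [mul_assoc]
    _ = _ := by
        rw [e3]; simp only [sd, ev, mul_assoc, mul_one]

theorem S2_sq (R : Rel a b c) {n : ℕ} (h : se (se n) = n) :
    ev (eps a c) (sd n ++ sd (se n)) * ev (eps a c) (sd n ++ sd (se n)) = 1 := by
  have h1 := rr_S R n
  have h2 := rr_S R (se n)
  have h4 := R.s4
  generalize (b ^ 2 * c * b ^ 2 * c ^ 4 * b * c ^ 4) = S at *
  rw [h] at h2
  rw [ev_append]
  generalize ev (eps a c) (sd n) = X at *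
  generalize ev (eps a c) (sd (se n)) = Y at *
  have h5 : rr a c n * S ^ 2 = X * Y * rr a c n := by
    rw [pow_two, ← mul_assoc, h1, mul_assoc, h2, mul_assoc]
  have h6 : rr a c n * S ^ 4 = X * Y * (X * Y) * rr a c n := by
    have : S ^ 4 = S ^ 2 * S ^ 2 := by rw [← pow_add]
    rw [this, ← mul_assoc, h5, mul_assoc, h5]; simp only [mul_assoc]
  rw [h4, mul_one] at h6
  exact mul_eq_right.1 h6.symm

def TV (a c : G) (t : List (ℕ × List ℕ)) : Prop :=
  ∀ p ∈ t, eps a c p.1 = ev (sv a c) p.2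

theorem look_valid {t : List (ℕ × List ℕ)} (h : TV a c t) {d : ℕ} {w : List ℕ}
    (hl : look t d = some w) : eps a c d = ev (sv a c) w := by
  induction t with
  | nil => simp [look] at hl
  | cons p t ih =>
    obtain ⟨e, w'⟩ := p
    simp only [look] at hl
    cases hb : Nat.beq e d with
    | true =>
      rw [hb] at hl
      have he : e = d := (beq_iff _ _).1 hb
      simp only [cond_true, Option.some.injEq] at hl
      have := h (e, w') (by simp)
      rw [← he, ← hl]; exact this
    | false =>
      rw [hb] at hl
      exact ih (fun p hp => h p (by simp [hp])) hl

theorem wordOf_valid {t : List (ℕ × List ℕ)} (h : TV a c t) {ds : List ℕ} {w : List ℕ}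
    (hl : wordOf t ds = some w) : ev (eps a c) ds = ev (sv a c) w := by
  induction ds generalizing w with
  | nil =>
    simp only [wordOf, Option.some.injEq] at hl
    simp [← hl, ev]
  | cons d ds ih =>
    simp only [wordOf] at hl
    split at hl
    · simp at hl
    · rename_i w1 h1
      split at hl
      · simp at hl
      · rename_i w2 h2
        simp only [Option.some.injEq] at hl
        rw [← hl, ev_append, ev, look_valid h h1, ih h2]

theorem build_valid (R : Rel a b c) (s : List ℕ) {t t' : List (ℕ × List ℕ)} (h : TV a c t)
    (hb : build s t = some t') : TV a c t' := by
  induction s generalizing t with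
  | nil =>
    simp only [build, Option.some.injEq] at hb
    rw [← hb]; exact h
  | cons d s ih =>
    simp only [build] at hb
    split at hb
    · simp at hb
    · rename_i x hx
      simp only [force2_eq, forceN_eq] at hb
      cases hd : Nat.blt d 504 with
      | false => simp [hd] at hb
      | true =>
        rw [hd, cond_true] at hb
        have hd' : d < 504 := (blt_iff _ _).1 hd
        refine ih ?_ hb
        have hw := wordOf_valid h hx
        simp only [ev, mul_one] at hw
        have ht := eps_tri R hd'
        rw [mul_assoc, hw] at ht
        have e1 : eps a c d = (ev (sv a c) x)⁻¹ := eq_inv_of_mul_eq_one_left ht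
        have e2 : ev (sv a c) (red sx x) = ev (sv a c) x := ev_red (sv_sx a c) x
        intro p hp
        simp only [List.mem_cons] at hp
        rcases hp with rfl | rfl | hp
        · simp only [ev_invw, e2]; exact e1
        · simp only [e2, eps_at R hd', e1, inv_inv]
        · exact h p hp

theorem gen_lt {i : ℕ} (h : i < 14) : gen i < 504 := by
  have := tabCheck_ok
  rw [tabCheck, Bool.and_eq_true, List.all_eq_true] at this
  exact (blt_iff _ _).1 (this.1 i (List.mem_range.2 h))

theorem tab0_valid (R : Rel a b c) : TV a c tab0 := by
  intro p hp
  simp only [tab0, List.mem_append, List.mem_map, List.mem_range] at hp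
  rcases hp with ((⟨v, hv, rfl⟩ | ⟨v, hv, rfl⟩) | ⟨i, hi, rfl⟩) | ⟨i, hi, rfl⟩
  · simp [ev, eps_tree R hv]
  · simp only [ev]
    rw [eps_at R (by omega), eps_tree R hv, inv_one]
  · have : 2 * i / 2 = i := by omega
    simp [ev, sv, this, hi]
  · have h1 : (2 * i + 1) / 2 = i := by omega
    have h2 : (2 * i + 1) % 2 = 1 := by omega
    simp only [ev]
    rw [eps_at R (gen_lt hi)]
    simp [sv, h1, h2, hi]

/-- The fourteen generators of the kernel. -/
def xs (a c : G) (i : ℕ) : G := sv a c (2 * i)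

theorem tab_ok (R : Rel a b c) :
    ∃ t, TV a c t ∧ tabCheck1 t = true ∧ tabCheck2 t = true ∧ tabCheck3 t = true ∧
      tabCheck4 t = true := by
  have := tabCheck_ok
  rw [tabCheck, Bool.and_eq_true] at this
  have h2 := this.2
  split at h2
  · simp at h2
  · rename_i t ht
    simp only [Bool.and_eq_true] at h2
    exact ⟨t, build_valid R _ (tab0_valid R) ht, h2.1.1.1, h2.1.1.2, h2.1.2, h2.2⟩

theorem xs_sq (R : Rel a b c) (i : ℕ) : xs a c i * xs a c i = 1 := by
  by_cases hi : i < 14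
  · obtain ⟨t, ht, -, h2, -, -⟩ := tab_ok R
    simp only [tabCheck2, List.all_eq_true, List.mem_range, forceN_eq, Bool.and_eq_true,
      beq_iff] at h2
    obtain ⟨h3, h4⟩ := h2 i hi
    generalize sqL.getD i 0 = s at h3 h4
    have h5 := S2_sq R h3
    split at h4
    · simp at h4
    · rename_i w hw
      rw [wordOf_valid ht hw, ← ev_append,
        ← ev_cyc (sv_sx a c) 1 (by simp)] at h5
      simp only [Bool.or_eq_true, beq_iff_eq] at h4
      rcases h4 with h4 | h4
      · rw [h4] at h5
        simpa [ev, xs] using h5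
      · rw [h4] at h5
        have e : sx (2 * i) = 2 * i + 1 := by
          have : 2 * i % 2 = 0 := by omega
          simp [sx, this]
        simp only [ev, mul_one, ← e, sv_sx] at h5
        rw [← mul_inv_rev, inv_eq_one] at h5
        exact h5
  · simp [xs, sv, hi]

theorem ev_half (R : Rel a b c) (w : List ℕ) : ev (xs a c) (half w) = ev (sv a c) w := by
  induction w with
  | nil => rfl
  | cons x t ih =>
    simp only [half] at ih
    simp only [half, List.map_cons, ev, ih]
    congr 1
    rcases Nat.mod_two_eq_zero_or_one x with h | h
    · rw [xs]; congr 1; omega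
    · have e : sx x = 2 * (x / 2) := by
        have : sx x = x - 1 := by rw [sx, h]; rfl
        omega
      rw [xs, ← e, sv_sx]
      have h2 : sv a c x = (sv a c (sx x))⁻¹ := by rw [sv_sx, inv_inv]
      have h3 := xs_sq R (x / 2)
      rw [xs, ← e] at h3
      have h4 := inv_eq_of_mul_eq_one_left h3
      rw [sv_sx] at h4
      rw [← h4]; simp

theorem init_valid (R : Rel a b c) (z u : G) : Valid (xs a c) z u db0 := by
  obtain ⟨t, ht, -, -, h3, h4⟩ := tab_ok R
  have hv : ∀ x, xs a c (id x) = (xs a c x)⁻¹ :=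
    fun x => (inv_eq_of_mul_eq_one_left (xs_sq R x)).symm
  have c0 : ct z u 0 = 1 := by simp [ct]
  intro f hf
  simp only [db0, initW, List.mem_map, List.mem_append, List.mem_singleton] at hf
  obtain ⟨w, hw, rfl⟩ := hf
  simp only [c0]
  rcases hw with ⟨p, hp, rfl⟩ | rfl
  · simp only [tabCheck3, List.all_eq_true, Bool.and_eq_true, beq_iff] at h3
    obtain ⟨h5, h6⟩ := h3 p hp
    have h7 := S2_sq R h5
    split at h6
    · simp at h6
    · rename_i w hw
      rw [wordOf_valid ht hw, ← ev_append, ← ev_half R, ← ev_cyc hv 1 (by simp)] at h7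
      rw [beq_iff_eq] at h6
      rw [← h6]; exact h7
  · simp only [tabCheck4, Bool.and_eq_true, blt_iff] at h4
    obtain ⟨h5, h6⟩ := h4
    have h7 := eps_tri R h5
    split at h6
    · simp at h6
    · rename_i w hw
      have h8 := wordOf_valid ht hw
      simp only [ev, mul_one, ← mul_assoc] at h8
      rw [h7, ← ev_half R] at h8
      rw [beq_iff_eq] at h6
      rw [← h6]
      exact (ev_cyc hv 1 (by simp) _).2 h8.symm

theorem eps_word (R : Rel a b c) {n : ℕ} (h : n < 504) : ∃ w, eps a c n = ev (xs a c) w := by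
  obtain ⟨t, ht, h1, -⟩ := tab_ok R
  simp only [tabCheck1, List.all_eq_true, List.mem_range] at h1
  obtain ⟨w, hw⟩ := Option.isSome_iff_exists.1 (h1 n h)
  exact ⟨half w, by rw [ev_half R]; exact look_valid ht hw⟩

/-! ### The kernel is generated by involutions commuting up to a central involution -/

theorem xs_inv (R : Rel a b c) (i : ℕ) : xs a c i = (xs a c i)⁻¹ :=
  (inv_eq_of_mul_eq_one_left (xs_sq R i)).symm

theorem xs_big {i : ℕ} (h : ¬ i < 14) : xs a c i = 1 := by
  simp [xs, sv, h]

/-- Reading off that the square of a product of two generators is a central involution. -/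
theorem central_of_words {v : ℕ → G} (hv : ∀ x, v x * v x = 1) (p q : ℕ)
    (h1 : ev v [p, q, p, q, p, q, p, q] = 1)
    (h2 : ∀ y, y < 14 → ev v [y, p, q, p, q, y, q, p, q, p] = 1)
    (h3 : ∀ y, ¬ y < 14 → v y = 1) :
    ev v [p, q, p, q] * ev v [p, q, p, q] = 1 ∧
      ∀ x, v x * ev v [p, q, p, q] = ev v [p, q, p, q] * v x := by
  have hi : ∀ x, (v x)⁻¹ = v x := fun x => inv_eq_of_mul_eq_one_left (hv x)
  refine ⟨by rw [← ev_append]; exact h1, fun y => ?_⟩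
  by_cases hy : y < 14
  · have e : ev v [y, p, q, p, q, y, q, p, q, p] =
        (v y * ev v [p, q, p, q]) * (ev v [p, q, p, q] * v y)⁻¹ := by
      simp only [ev, mul_one, mul_inv_rev, hi, mul_assoc]
    have h4 := h2 y hy
    rw [e] at h4
    exact mul_inv_eq_one.1 h4
  · simp [h3 y hy]

theorem kernel_rel (R : Rel a b c) : ∃ z : G, z * z = 1 ∧
    (∀ x, xs a c x * z = z * xs a c x) ∧
    ∀ i j, j < i → i < 14 → xs a c j * xs a c i * xs a c j * xs a c i = 1 ∨
      xs a c j * xs a c i * xs a c j * xs a c i = z := by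
  have hv := xs_inv R
  have S1 : Setup (xs a c) (1 : G) 1 := ⟨hv, by simp, by simp, by simp, by simp, by simp⟩
  obtain ⟨d1, v1, g1⟩ := runAll_valid S1 certA (init_valid R 1 1) _ checkA
  simp only [goalA, Bool.and_eq_true, List.all_eq_true, List.mem_range] at g1
  have c0 : ∀ z u : G, ct z u 0 = 1 := by simp [ct]
  obtain ⟨z2, zc⟩ := central_of_words (xs_sq R) 0 1 (by simpa [c0] using inDB_valid v1 g1.1)
    (fun y hy => by simpa [c0] using inDB_valid v1 (g1.2 y hy)) (fun y hy => xs_big hy)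
  obtain ⟨z, hz⟩ : ∃ z, z = ev (xs a c) [0, 1, 0, 1] := ⟨_, rfl⟩
  rw [← hz] at z2 zc
  have S2 : Setup (xs a c) z 1 := ⟨hv, z2, by simp, zc, by simp, by simp⟩
  have i2 : Valid (xs a c) z 1 (([0, 1, 0, 1], 1) :: db0) := by
    intro f hf
    rcases List.mem_cons.1 hf with rfl | hf
    · simp [ct, ← hz]
    · exact init_valid R z 1 f hf
  obtain ⟨d2, v2, g2⟩ := runAll_valid S2 certU i2 _ checkU
  simp only [goalU, Bool.and_eq_true, List.all_eq_true, List.mem_range] at g2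
  obtain ⟨u2, uc⟩ := central_of_words (xs_sq R) 0 3 (by simpa [c0] using inDB_valid v2 g2.1)
    (fun y hy => by simpa [c0] using inDB_valid v2 (g2.2 y hy)) (fun y hy => xs_big hy)
  have zu := ev_comm zc [0, 3, 0, 3]
  obtain ⟨u, hu⟩ : ∃ u, u = ev (xs a c) [0, 3, 0, 3] := ⟨_, rfl⟩
  rw [← hu] at u2 uc zu
  have S3 : Setup (xs a c) z u := ⟨hv, z2, u2, zc, uc, zu⟩
  have i3 : Valid (xs a c) z u (([0, 3, 0, 3], 2) :: ([0, 1, 0, 1], 1) :: db0) := by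
    intro f hf
    rcases List.mem_cons.1 hf with rfl | hf
    · have : Nat.testBit 2 0 = false := by decide
      have h1 : Nat.testBit 2 1 = true := by decide
      simp [ct, ← hu, this, h1]
    rcases List.mem_cons.1 hf with rfl | hf
    · have b11 : Nat.testBit 1 1 = false := by decide
      simp [ct, ← hz, b11]
    · exact init_valid R z u f hf
  obtain ⟨d3, v3, g3⟩ := runAll_valid S3 certC i3 _ checkC
  simp only [goalC, Bool.and_eq_true, List.all_eq_true, List.mem_range, Bool.or_eq_true] at g3
  have b20 : Nat.testBit 2 0 = false := by decide
  have b21 : Nat.testBit 2 1 = true := by decide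
  have b30 : Nat.testBit 3 0 = true := by decide
  have hu1 : u = 1 := by
    have := inDB_valid v3 g3.1
    simpa [ct, ev, b20, b21] using this.symm
  refine ⟨z, z2, zc, fun i j hj hi => ?_⟩
  have e : xs a c j * xs a c i * xs a c j * xs a c i = ev (xs a c) [j, i, j, i] := by
    simp only [ev, mul_one, mul_assoc]
  rw [e]
  have b00 : Nat.testBit 0 0 = false := by decide
  have b10 : Nat.testBit 1 0 = true := by decide
  rcases g3.2 i hi j hj with ((h | h) | h) | h <;> have hq := inDB_valid v3 h <;>
    simp only [ct, hu1, ite_self, mul_one] at hq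
  · left; rw [hq, b00]; rfl
  · right; rw [hq, b10]; rfl
  · left; rw [hq, b20]; rfl
  · right; rw [hq, b30]; rfl

/-! ### Counting -/

def prods (z : G) : List G → List G
  | [] => [1, z]
  | x :: l => prods z l ++ (prods z l).map (· * x)

theorem prods_length (z : G) (l : List G) : (prods z l).length = 2 * 2 ^ l.length := by
  induction l with
  | nil => rfl
  | cons x l ih => simp [prods, ih, pow_succ]; ring

theorem one_mem_prods (z : G) (l : List G) : 1 ∈ prods z l := by
  induction l with
  | nil => simp [prods]
  | cons x l ih => simp [prods, ih]

theorem prods_closed {z : G} (z2 : z * z = 1) (l : List G) (hz : ∀ x ∈ l, x * z = z * x)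
    (h2 : ∀ x ∈ l, x * x = 1)
    (hp : l.Pairwise fun x y => x * y = y * x ∨ x * y = y * z * x) :
    (∀ g ∈ prods z l, g * z ∈ prods z l) ∧ ∀ y ∈ l, ∀ g ∈ prods z l, g * y ∈ prods z l := by
  induction l with
  | nil => simp [prods, z2]
  | cons x l ih =>
    rw [List.pairwise_cons] at hp
    obtain ⟨i1, i2⟩ := ih (fun y hy => hz y (by simp [hy])) (fun y hy => h2 y (by simp [hy])) hp.2
    have hzx := hz x (by simp)
    have hx2 := h2 x (by simp)
    have key : ∀ g, g ∈ prods z (x :: l) ↔ g ∈ prods z l ∨ ∃ h ∈ prods z l, h * x = g := by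
      intro g; simp [prods]
    constructor
    · intro g hg
      rw [key] at hg ⊢
      rcases hg with hg | ⟨h, hh, rfl⟩
      · exact Or.inl (i1 g hg)
      · exact Or.inr ⟨h * z, i1 h hh, by rw [mul_assoc, mul_assoc, hzx]⟩
    · intro y hy g hg
      rw [key] at hg ⊢
      rcases List.mem_cons.1 hy with rfl | hy
      · rcases hg with hg | ⟨h, hh, rfl⟩
        · exact Or.inr ⟨g, hg, rfl⟩
        · left; rw [mul_assoc, hx2, mul_one]; exact hh
      · rcases hg with hg | ⟨h, hh, rfl⟩
        · exact Or.inl (i2 y hy g hg)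
        · right
          rcases hp.1 y hy with e | e
          · exact ⟨h * y, i2 y hy h hh, by rw [mul_assoc, mul_assoc, e]⟩
          · exact ⟨h * y * z, i1 _ (i2 y hy h hh), by simp only [mul_assoc, e]⟩

theorem upper (R : Rel a b c) (hgen : Subgroup.closure {a, b, c} = (⊤ : Subgroup G)) :
    Finite G ∧ Nat.card G ≤ 32768 * 504 := by
  obtain ⟨z, z2, zc, hp⟩ := kernel_rel R
  have hv := xs_inv R
  let l : List G := (List.range 14).reverse.map (xs a c)
  have hl : ∀ i, i < 14 → xs a c i ∈ l := fun i hi =>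
    List.mem_map.2 ⟨i, by simpa using hi, rfl⟩
  obtain ⟨P1, P2⟩ := prods_closed z2 l (by
      intro x hx; obtain ⟨i, -, rfl⟩ := List.mem_map.1 hx; exact zc i) (by
      intro x hx; obtain ⟨i, -, rfl⟩ := List.mem_map.1 hx; exact xs_sq R i) (by
      rw [List.pairwise_map, List.pairwise_reverse]
      have h0 : (List.range 14).Pairwise (fun i j => i < j ∧ j < 14) := by decide
      refine h0.imp ?_
      rintro j i ⟨hji, hi⟩
      have hI : ∀ x, (xs a c x)⁻¹ = xs a c x := fun x => (hv x).symm
      rcases hp i j hji hi with h | h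
      · left
        have : xs a c j * xs a c i = (xs a c j * xs a c i)⁻¹ :=
          eq_inv_of_mul_eq_one_left (by simpa only [mul_assoc] using h)
        rw [this, mul_inv_rev, hI, hI]
      · right
        have : xs a c j * xs a c i * (xs a c j * xs a c i) = z := by
          simpa only [mul_assoc] using h
        have h2 : xs a c j * xs a c i = z * (xs a c j * xs a c i)⁻¹ :=
          eq_mul_inv_of_mul_eq this
        rw [mul_inv_rev, hI, hI] at h2
        have h3 : xs a c i * xs a c j = z * (xs a c j * xs a c i) := by
          rw [h2, ← mul_assoc, z2, one_mul]
        rw [h3, ← mul_assoc, ← zc, mul_assoc, ← zc])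
  have hw : ∀ w : List ℕ, ∀ g ∈ prods z l, g * ev (xs a c) w ∈ prods z l := by
    intro w
    induction w with
    | nil => intro g hg; simpa [ev] using hg
    | cons x w ih =>
      intro g hg
      rw [ev, ← mul_assoc]
      refine ih _ ?_
      by_cases hx : x < 14
      · exact P2 _ (hl x hx) g hg
      · rw [xs_big hx, mul_one]; exact hg
  let U : Set G := {g | ∃ k ∈ prods z l, ∃ n < 504, g = k * rr a c n}
  have Ua : ∀ g ∈ U, g * a ∈ U := by
    rintro g ⟨k, hk, n, hn, rfl⟩
    obtain ⟨w, hw'⟩ := eps_word R hn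
    refine ⟨k * eps a c n, by rw [hw']; exact hw w k hk, atf n, atf_lt hn, ?_⟩
    rw [mul_assoc, rr_a, mul_assoc]
  have Uc : ∀ m, ∀ g ∈ U, g * c ^ m ∈ U := by
    rintro m g ⟨k, hk, n, hn, rfl⟩
    exact ⟨k, hk, cs m n, cs_lt hn, by rw [rr_cs R, mul_assoc]⟩
  have ha : a⁻¹ = a := inv_eq_of_mul_eq_one_left R.a2
  have hc : c⁻¹ = c ^ 6 := by
    rw [inv_eq_iff_mul_eq_one, ← pow_succ']; exact R.c7
  have U1 : (1 : G) ∈ U := ⟨1, one_mem_prods z l, 0, by norm_num, by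
    have : rv a c 0 = 1 := by rw [rv]; simp
    simp [rr, this]⟩
  have Uall : ∀ g : G, g ∈ U := by
    intro g
    have hg : g ∈ Subgroup.closure ({a, b, c} : Set G) := by rw [hgen]; trivial
    have Ub : ∀ g ∈ U, g * b ∈ U := by
      intro g hg; rw [R.hb, hc, ← mul_assoc]; exact Uc 6 _ (Ua g hg)
    have Ubi : ∀ g ∈ U, g * b⁻¹ ∈ U := by
      intro g hg
      rw [R.hb, mul_inv_rev, inv_inv, ha, ← mul_assoc]
      have := Uc 1 g hg
      rw [pow_one] at this
      exact Ua _ this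
    induction hg using Subgroup.closure_induction_right with
    | one => exact U1
    | mul_right x hx y hy ih =>
      rcases hy with rfl | rfl | rfl
      · exact Ua _ ih
      · exact Ub _ ih
      · simpa using Uc 1 _ ih
    | mul_inv_cancel x hx y hy ih =>
      rcases hy with rfl | rfl | rfl
      · rw [ha]; exact Ua _ ih
      · exact Ubi _ ih
      · rw [hc]; exact Uc 6 _ ih
  have hlen : (prods z l).length = 32768 := by
    rw [prods_length]; simp [l]
  let f : Fin (prods z l).length × Fin 504 → G := fun p => (prods z l).get p.1 * rr a c p.2
  have hf : Function.Surjective f := by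
    intro g
    obtain ⟨k, hk, n, hn, rfl⟩ := Uall g
    obtain ⟨i, hi⟩ := List.mem_iff_get.1 hk
    exact ⟨(i, ⟨n, hn⟩), by simp [f, ← hi]⟩
  refine ⟨Finite.of_surjective f hf, ?_⟩
  have := Nat.card_le_card_of_surjective f hf
  rwa [Nat.card_prod, Nat.card_fin, Nat.card_fin, hlen] at this

end upper
/-! ### An extra-special group and the model action -/

abbrev EE : Type := ℕ × Bool

def row (k : ℕ) : ℕ := Nat.land (Nat.shiftRight rowT (14 * k)) 16383

def par : ℕ → ℕ → Bool
  | 0, _ => false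
  | k + 1, n => xor (n.testBit k) (par k n)

def rs : ℕ → ℕ → ℕ
  | 0, _ => 0
  | k + 1, v => Nat.xor (bif v.testBit k then row k else 0) (rs k v)

def ff (v w : ℕ) : Bool := forceN (Nat.land (rs 14 v) w) (par 14)

theorem par_xor (k m n : ℕ) : par k (m ^^^ n) = xor (par k m) (par k n) := by
  induction k with
  | zero => rfl
  | succ k ih =>
    simp only [par, ih, Nat.testBit_xor]
    cases m.testBit k <;> cases n.testBit k <;> cases par k m <;> cases par k n <;> rfl

theorem par_zero (k : ℕ) : par k 0 = false := by
  induction k with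
  | zero => rfl
  | succ k ih => simp [par, ih]

theorem rs_xor (k m n : ℕ) : rs k (m ^^^ n) = rs k m ^^^ rs k n := by
  induction k with
  | zero => simp [rs]
  | succ k ih =>
    have e : ∀ x y, Nat.xor x y = x ^^^ y := fun _ _ => rfl
    simp only [rs, ih, Nat.testBit_xor, e]
    generalize rs k m = x
    generalize rs k n = y
    generalize row k = r
    cases m.testBit k <;> cases n.testBit k <;>
      simp only [Bool.xor_false, Bool.xor_true, Bool.not_true, Bool.not_false, cond_true,
        cond_false, Nat.zero_xor]
    · rw [← Nat.xor_assoc, ← Nat.xor_assoc, Nat.xor_comm r x]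
    · rw [Nat.xor_assoc]
    · rw [Nat.xor_comm r x, Nat.xor_assoc, ← Nat.xor_assoc r r y, Nat.xor_self, Nat.zero_xor]

theorem rs_zero (k : ℕ) : rs k 0 = 0 := by
  induction k with
  | zero => rfl
  | succ k ih => simp [rs, ih]

theorem ff_eq (v w : ℕ) : ff v w = par 14 (rs 14 v &&& w) := by
  rw [ff, forceN_eq]; rfl

theorem ff_xor_left (u v w : ℕ) : ff (u ^^^ v) w = xor (ff u w) (ff v w) := by
  simp only [ff_eq, rs_xor, Nat.and_xor_distrib_right, par_xor]

theorem ff_xor_right (u v w : ℕ) : ff u (v ^^^ w) = xor (ff u v) (ff u w) := by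
  simp only [ff_eq, Nat.and_xor_distrib_left, par_xor]

theorem ff_zero_left (w : ℕ) : ff 0 w = false := by
  simp [ff_eq, rs_zero, par_zero]

theorem ff_zero_right (w : ℕ) : ff w 0 = false := by
  simp [ff_eq, par_zero]

def em (p q : EE) : EE := (Nat.xor p.1 q.1, xor (xor p.2 q.2) (ff p.1 q.1))

def eo : EE := (0, false)

theorem em_assoc (p q r : EE) : em (em p q) r = em p (em q r) := by
  obtain ⟨p, s⟩ := p
  obtain ⟨q, t⟩ := q
  obtain ⟨r, u⟩ := r
  have e : ∀ x y, Nat.xor x y = x ^^^ y := fun _ _ => rfl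
  simp only [em, e, ff_xor_left, ff_xor_right, Nat.xor_assoc]
  congr 1
  generalize ff p q = x1
  generalize ff p r = x2
  generalize ff q r = x3
  revert s t u x1 x2 x3
  decide

theorem em_one (p : EE) : em p eo = p := by
  simp [em, eo, ff_zero_right]

theorem one_em (p : EE) : em eo p = p := by
  simp [em, eo, ff_zero_left]

def lb1 (x : ℕ) : EE := (x / 2, Nat.beq (x % 2) 1)

def lb (i : ℕ) : EE := lb1 (Nat.land (Nat.shiftRight labT (15 * i)) 32767)

def forceE {α : Type} (p : EE) (k : EE → α) : α :=
  forceN p.1 fun v => bif p.2 then k (v, true) else k (v, false)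

theorem forceE_eq {α : Type} (p : EE) (k : EE → α) : forceE p k = k p := by
  obtain ⟨v, s⟩ := p
  cases s <;> simp [forceE, forceN_eq]

def path : EE → List ℕ → EE
  | k, [] => k
  | k, d :: ds => forceN d fun d' => forceE (lb d') fun l => forceE (em k l) fun k' => path k' ds

theorem path_cons (k : EE) (d : ℕ) (ds : List ℕ) : path k (d :: ds) = path (em k (lb d)) ds := by
  simp [path, forceN_eq, forceE_eq]

theorem path_em (k g : EE) (ds : List ℕ) : path (em k g) ds = em k (path g ds) := by
  induction ds generalizing g with
  | nil => rfl
  | cons d ds ih => rw [path_cons, path_cons, em_assoc, ih]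

theorem path_one (k : EE) (ds : List ℕ) : path k ds = em k (path eo ds) := by
  rw [← path_em, em_one]

theorem path_append (k : EE) (l m : List ℕ) : path k (l ++ m) = path (path k l) m := by
  induction l generalizing k with
  | nil => rfl
  | cons d l ih => rw [List.cons_append, path_cons, path_cons, ih]

def isE (v : ℕ) (p : EE) : Bool := Nat.beq p.1 v && !p.2

theorem isE_iff {v : ℕ} {p : EE} (h : isE v p = true) : p = (v, false) := by
  obtain ⟨w, s⟩ := p
  simpa [isE, beq_iff] using h

def modCheck1 : Bool :=
  (List.range 504).all fun i => isE 0 (path eo [i, atf i]) &&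
    isE 0 (path eo [i, btf i, btf (btf i)]) && Nat.beq (se (se i)) i &&
    isE 0 (path eo ((sd i ++ sd (se i)) ++ (sd i ++ sd (se i))))

theorem modCheck1_ok : modCheck1 = true := by decide +kernel

def modCheck2 : Bool :=
  ((List.range 71).all fun v => isE 0 (lb (7 * (v + 1)))) &&
  ((List.range 14).all fun j => isE (2 ^ j) (lb (gen j))) &&
  (Nat.beq (path eo [gen 0, gen 1, gen 0, gen 1]).1 0 && (path eo [gen 0, gen 1, gen 0, gen 1]).2)

theorem modCheck2_ok : modCheck2 = true := by decide +kernel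

theorem lb_at {i : ℕ} (h : i < 504) : path eo [i, atf i] = eo := by
  have := modCheck1_ok
  simp only [modCheck1, Bool.and_eq_true, List.all_eq_true, List.mem_range, beq_iff] at this
  exact isE_iff (this i h).1.1.1

theorem lb_tri {i : ℕ} (h : i < 504) : path eo [i, btf i, btf (btf i)] = eo := by
  have := modCheck1_ok
  simp only [modCheck1, Bool.and_eq_true, List.all_eq_true, List.mem_range, beq_iff] at this
  exact isE_iff (this i h).1.1.2

theorem se_se {i : ℕ} (h : i < 504) : se (se i) = i := by
  have := modCheck1_ok
  simp only [modCheck1, Bool.and_eq_true, List.all_eq_true, List.mem_range, beq_iff] at this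
  exact (this i h).1.2

theorem lb_S {i : ℕ} (h : i < 504) :
    path eo ((sd i ++ sd (se i)) ++ (sd i ++ sd (se i))) = eo := by
  have := modCheck1_ok
  simp only [modCheck1, Bool.and_eq_true, List.all_eq_true, List.mem_range, beq_iff] at this
  exact isE_iff (this i h).2

theorem lb_tree {v : ℕ} (h : v < 71) : lb (7 * (v + 1)) = eo := by
  have := modCheck2_ok
  simp only [modCheck2, Bool.and_eq_true, List.all_eq_true, List.mem_range, beq_iff] at this
  exact isE_iff (this.1.1 v h)

theorem lb_gen {j : ℕ} (h : j < 14) : lb (gen j) = (2 ^ j, false) := by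
  have := modCheck2_ok
  simp only [modCheck2, Bool.and_eq_true, List.all_eq_true, List.mem_range, beq_iff] at this
  exact isE_iff (this.1.2 j h)

theorem lb_z : path eo [gen 0, gen 1, gen 0, gen 1] = (0, true) := by
  have := modCheck2_ok
  simp only [modCheck2, Bool.and_eq_true, List.all_eq_true, List.mem_range, beq_iff] at this
  exact Prod.ext this.2.1 this.2.2

theorem lb_tree' {v : ℕ} (h : v < 71) : lb (atf (7 * (v + 1))) = eo := by
  have h1 := lb_at (i := 7 * (v + 1)) (by omega)
  rw [path_cons, path_cons, lb_tree h, em_one, one_em] at h1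
  exact h1

theorem cs_cs (m n i : ℕ) : cs m (cs n i) = cs (n + m) i := by unfold cs; omega
theorem cs_seven (i : ℕ) : cs 7 i = i := by unfold cs; omega

abbrev Om : Type := EE × Fin 504

def fa (x : Om) : Om := (em x.1 (lb x.2), ⟨atf x.2, atf_lt x.2.2⟩)

def fc (m : ℕ) (x : Om) : Om := (x.1, ⟨cs m x.2, cs_lt x.2.2⟩)

theorem fa_fa (x : Om) : fa (fa x) = x := by
  obtain ⟨k, i, hi⟩ := x
  simp only [fa, atf_atf hi]
  have h1 := lb_at hi
  rw [path_cons, path_cons, one_em] at h1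
  rw [em_assoc]
  simp only [path] at h1
  rw [h1, em_one]

theorem fc_fc (m n : ℕ) (x : Om) : fc m (fc n x) = fc (n + m) x := by
  simp [fc, cs_cs]

theorem fc_seven (x : Om) : fc 7 x = x := by simp [fc, cs_seven]

abbrev PP : Type := (Equiv.Perm Om)ᵐᵒᵖ

def pa : PP := MulOpposite.op ⟨fa, fa, fa_fa, fa_fa⟩
def pc : PP := MulOpposite.op ⟨fc 1, fc 6, fun x => by rw [fc_fc, fc_seven],
  fun x => by rw [fc_fc, fc_seven]⟩
def pb : PP := pa⁻¹ * pc⁻¹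

def act (x : Om) (g : PP) : Om := g.unop x

theorem act_mul (x : Om) (g h : PP) : act x (g * h) = act (act x g) h := rfl
theorem act_one (x : Om) : act x 1 = x := rfl
theorem act_ext {g h : PP} (H : ∀ x, act x g = act x h) : g = h :=
  MulOpposite.unop_injective (Equiv.ext H)
theorem act_a (x : Om) : act x pa = fa x := rfl
theorem act_c (x : Om) : act x pc = fc 1 x := rfl
theorem act_b (x : Om) : act x pb = fc 6 (fa x) := rfl
theorem act_c4 (x : Om) : act x (pc ^ 4) = fc 4 x := by
  simp only [pow_succ, pow_zero, one_mul, act_mul, act_c, fc_fc]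
theorem act_inv (x : Om) (g : PP) : act (act x g⁻¹) g = x := by
  rw [← act_mul, inv_mul_cancel, act_one]

theorem act_b' (k : EE) (i : ℕ) (hi : i < 504) :
    act (k, ⟨i, hi⟩) pb = (path k [i], ⟨btf i, btf_lt hi⟩) := by
  rw [act_b, path_cons]; rfl

theorem sm_lt {i : ℕ} (h : i < 504) : sm i < 504 := cs_lt (btf_lt (btf_lt h))
theorem smb_lt {i : ℕ} (h : i < 504) : smb i < 504 := cs_lt (btf_lt (btf_lt (sm_lt h)))
theorem se_lt {i : ℕ} (h : i < 504) : se i < 504 := cs_lt (btf_lt (smb_lt h))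

theorem pa2 : pa ^ 2 = 1 := act_ext fun x => by
  rw [pow_two, act_mul, act_a, act_a, fa_fa, act_one]

theorem pc7 : pc ^ 7 = 1 := act_ext fun x => by
  simp only [pow_succ, pow_zero, one_mul, act_mul, act_c, fc_fc, act_one]
  exact fc_seven x

theorem pb3 : pb ^ 3 = 1 := act_ext fun x => by
  obtain ⟨k, i, hi⟩ := x
  simp only [pow_succ, pow_zero, one_mul, act_mul, act_b', act_one]
  rw [← path_append, ← path_append, path_one]
  simp only [List.cons_append, List.nil_append, lb_tri hi, em_one, btf3 hi]

theorem act_S (k : EE) (i : ℕ) (hi : i < 504) :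
    act (k, ⟨i, hi⟩) (pb ^ 2 * pc * pb ^ 2 * pc ^ 4 * pb * pc ^ 4) =
      (path k (sd i), ⟨se i, se_lt hi⟩) := by
  have h2 : ∀ x, act x (pb ^ 2) = act (act x pb) pb := fun x => by rw [pow_two, act_mul]
  simp only [act_mul, act_c4, h2, act_b', act_c, fc, ← path_append]
  rfl

theorem act_four (x : Om) (s : PP) : act x (s ^ 4) = act (act (act (act x s) s) s) s := by
  simp only [pow_succ, pow_zero, one_mul, act_mul]

theorem pS4 : (pb ^ 2 * pc * pb ^ 2 * pc ^ 4 * pb * pc ^ 4) ^ 4 = 1 := act_ext fun x => by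
  obtain ⟨k, i, hi⟩ := x
  rw [act_four, act_S, act_S, act_S, act_S, act_one]
  rw [← path_append, ← path_append, ← path_append, path_one]
  have h := lb_S hi
  simp only [se_se hi]
  rw [List.append_assoc] at h
  rw [h, em_one]

/-! ### The orbit of the base point -/

structure Orb (O : Set Om) : Prop where
  a : ∀ x ∈ O, fa x ∈ O
  c : ∀ x ∈ O, fc 1 x ∈ O
  base : ((eo, ⟨0, by norm_num⟩) : Om) ∈ O

section orbit
variable {O : Set Om}

theorem orb_c (h : Orb O) (m : ℕ) (x : Om) (hx : x ∈ O) : fc m x ∈ O := by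
  induction m with
  | zero =>
    have : fc 0 x = x := by
      have e : ∀ i, cs 0 i = i := fun i => by unfold cs; omega
      simp [fc, e]
    rwa [this]
  | succ m ih => rw [← fc_fc]; exact h.c _ ih

/-- Membership in the orbit, with the bound on the index bundled in. -/
def InO (O : Set Om) (k : EE) (n : ℕ) : Prop := ∃ h : n < 504, ((k, ⟨n, h⟩) : Om) ∈ O

theorem inO_c (h : Orb O) {k : EE} {n : ℕ} (m : ℕ) (hx : InO O k n) : InO O k (cs m n) := by
  obtain ⟨hn, hx⟩ := hx
  exact ⟨cs_lt hn, orb_c h m _ hx⟩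

theorem inO_a (h : Orb O) {k : EE} {n : ℕ} (hx : InO O k n) : InO O (em k (lb n)) (atf n) := by
  obtain ⟨hn, hx⟩ := hx
  exact ⟨atf_lt hn, h.a _ hx⟩

theorem inO_up (h : Orb O) {k : EE} (h0 : InO O k 0) (v : ℕ) (hv : v < 72) :
    ∀ n, n / 7 = v → InO O k n := by
  induction v using Nat.strong_induction_on with
  | _ v ih =>
    have h7 : InO O k (7 * v) := by
      rcases v with _ | v
      · exact h0
      · have h1 := ih _ (atf_tree (v := v) (by omega)) (by
          have := atf_tree (v := v) (by omega); omega) _ rfl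
        have h2 := inO_a h h1
        rwa [lb_tree' (by omega), em_one, atf_atf (by omega)] at h2
    intro n hn
    have := inO_c h (n % 7) h7
    have e : cs (n % 7) (7 * v) = n := by unfold cs; omega
    rwa [e] at this

theorem inO_down (h : Orb O) {k : EE} (v : ℕ) (hv : v < 72) :
    ∀ n, n / 7 = v → InO O k n → InO O k 0 := by
  induction v using Nat.strong_induction_on with
  | _ v ih =>
    intro n hn hx
    have h7 := inO_c h (7 - n % 7) hx
    have e : cs (7 - n % 7) n = 7 * v := by unfold cs; omega
    rw [e] at h7
    rcases v with _ | v
    · exact h7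
    · have h2 := inO_a h h7
      rw [lb_tree (by omega), em_one] at h2
      exact ih _ (atf_tree (v := v) (by omega)) (by
          have := atf_tree (v := v) (by omega); omega) _ rfl h2

theorem inO_gen (h : Orb O) {k : EE} (h0 : InO O k 0) {j : ℕ} (hj : j < 14) :
    InO O (em k (lb (gen j))) 0 := by
  have hg := gen_lt hj
  have h1 := inO_a h (inO_up h h0 (gen j / 7) (by omega) (gen j) rfl)
  have := atf_lt hg
  exact inO_down h _ (by omega) _ rfl h1

theorem inO_all (h : Orb O) (m : ℕ) (hm : m ≤ 14) : ∀ v < 2 ^ m, ∀ s, InO O (v, s) 0 := by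
  have hb : InO O eo 0 := ⟨by norm_num, h.base⟩
  induction m with
  | zero =>
    intro v hv s
    have : v = 0 := by simpa using hv
    subst this
    cases s with
    | false => exact hb
    | true =>
      have := inO_gen h (inO_gen h (inO_gen h (inO_gen h hb (j := 0) (by norm_num))
        (j := 1) (by norm_num)) (j := 0) (by norm_num)) (j := 1) (by norm_num)
      have hz := lb_z
      simp only [path_cons] at hz
      rw [← hz]; exact this
  | succ m ih =>
    intro v hv s
    by_cases hlt : v < 2 ^ m
    · exact ih (by omega) v hlt s
    · rw [pow_succ] at hv
      obtain ⟨w, rfl⟩ : ∃ w, v = 2 ^ m + w := ⟨v - 2 ^ m, by omega⟩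
      have hw : w < 2 ^ m := by omega
      have e : 2 ^ m + w = w ^^^ 2 ^ m := by
        apply Nat.eq_of_testBit_eq
        intro i
        rw [Nat.testBit_xor, Nat.testBit_two_pow]
        rcases lt_trichotomy i m with hi | hi | hi
        · rw [Nat.testBit_two_pow_add_gt hi]
          have : m ≠ i := by omega
          simp [this]
        · subst hi
          rw [Nat.testBit_two_pow_add_eq]
          simp
        · have h1 : 2 ^ (m + 1) ≤ 2 ^ i := Nat.pow_le_pow_right (by norm_num) hi
          rw [pow_succ] at h1
          rw [Nat.testBit_lt_two_pow (by omega), Nat.testBit_lt_two_pow (by omega)]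
          have : m ≠ i := by omega
          simp [this]
      have h1 := inO_gen h (ih (by omega) w hw (xor s (ff w (2 ^ m)))) (j := m) (by omega)
      rw [lb_gen (by omega)] at h1
      have e2 : em (w, xor s (ff w (2 ^ m))) (2 ^ m, false) = (2 ^ m + w, s) := by
        rw [e]
        simp only [em]
        refine Prod.ext rfl ?_
        simp
      rwa [e2] at h1

theorem orb_all (h : Orb O) (v : Fin 16384) (s : Bool) (n : Fin 504) :
    (((v : ℕ), s), n) ∈ O := by
  have h0 := inO_all h 14 le_rfl v v.2 s
  obtain ⟨h1, h2⟩ := inO_up h h0 (n / 7) (by omega) n rfl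
  exact h2

end orbit

theorem lower {G : Type*} [Group G] [Finite G] (φ : G →* PP) (a c : G) (ha : φ a = pa)
    (hc : φ c = pc) : 16515072 ≤ Nat.card G := by
  let x0 : Om := (eo, ⟨0, by norm_num⟩)
  have h : Orb {x | ∃ g, act x0 (φ g) = x} := by
    refine ⟨?_, ?_, ⟨1, by rw [map_one]; rfl⟩⟩
    · rintro x ⟨g, rfl⟩
      exact ⟨g * a, by rw [map_mul, act_mul, ha, act_a]⟩
    · rintro x ⟨g, rfl⟩
      exact ⟨g * c, by rw [map_mul, act_mul, hc, act_c]⟩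
  have h2 : ∀ p : (Fin 16384 × Bool) × Fin 504, ∃ g, act x0 (φ g) = (((p.1.1 : ℕ), p.1.2), p.2) :=
    fun p => orb_all h p.1.1 p.1.2 p.2
  choose f hf using h2
  have hinj : Function.Injective f := by
    rintro ⟨⟨v, s⟩, n⟩ ⟨⟨w, t⟩, m⟩ e
    have h1 := hf ((v, s), n)
    rw [e, hf] at h1
    simp only [Prod.mk.injEq] at h1 ⊢
    exact ⟨⟨(Fin.ext h1.1.1).symm, h1.1.2.symm⟩, h1.2.symm⟩
  have := Nat.card_le_card_of_injective f hinj
  simpa [Nat.card_prod] using this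

end HW

theorem stmt_16 : Nat.card (PresentedGroup (hurwitzRels 4)) = 16515072 := by
  let a : PresentedGroup (hurwitzRels 4) := PresentedGroup.of 0
  let b : PresentedGroup (hurwitzRels 4) := PresentedGroup.of 1
  let c : PresentedGroup (hurwitzRels 4) := PresentedGroup.of 2
  have ra : a ^ 2 = 1 := PresentedGroup.one_of_mem (rels := hurwitzRels 4)
    (x := FreeGroup.of 0 ^ 2) (by simp [hurwitzRels])
  have rb : b ^ 3 = 1 := PresentedGroup.one_of_mem (rels := hurwitzRels 4)
    (x := FreeGroup.of 1 ^ 3) (by simp [hurwitzRels])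
  have rc : c ^ 7 = 1 := PresentedGroup.one_of_mem (rels := hurwitzRels 4)
    (x := FreeGroup.of 2 ^ 7) (by simp [hurwitzRels])
  have rabc : a * b * c = 1 := PresentedGroup.one_of_mem (rels := hurwitzRels 4)
    (x := FreeGroup.of 0 * FreeGroup.of 1 * FreeGroup.of 2) (by simp [hurwitzRels])
  have rs : (b ^ 2 * c * b ^ 2 * c ^ 4 * b * c ^ 4) ^ 4 = 1 :=
    PresentedGroup.one_of_mem (rels := hurwitzRels 4)
      (x := (FreeGroup.of 1 ^ 2 * FreeGroup.of 2 * FreeGroup.of 1 ^ 2 *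
        FreeGroup.of 2 ^ 4 * FreeGroup.of 1 * FreeGroup.of 2 ^ 4) ^ 4) (by simp [hurwitzRels])
  have haa : a * a = 1 := by rw [← pow_two]; exact ra
  have R : HW.Rel a b c := by
    refine ⟨haa, rc, ?_, by rw [← pow_two, ← pow_succ]; exact rb, rs⟩
    have h1 : a * b = c⁻¹ := eq_inv_of_mul_eq_one_left rabc
    rw [← h1, ← mul_assoc, haa, one_mul]
  have hgen : Subgroup.closure {a, b, c} = (⊤ : Subgroup (PresentedGroup (hurwitzRels 4))) := by
    rw [← PresentedGroup.closure_range_of (hurwitzRels 4)]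
    congr 1
    ext x
    simp only [Set.mem_insert_iff, Set.mem_singleton_iff, Set.mem_range, Fin.exists_fin_succ,
      a, b, c]
    simp [eq_comm]
  obtain ⟨hfin, hle⟩ := HW.upper R hgen
  let f : Fin 3 → HW.PP := ![HW.pa, HW.pb, HW.pc]
  have hrel : ∀ r ∈ hurwitzRels 4, FreeGroup.lift f r = 1 := by
    intro r hr
    have f0 : f 0 = HW.pa := rfl
    have f1 : f 1 = HW.pb := rfl
    have f2 : f 2 = HW.pc := rfl
    simp only [hurwitzRels, Set.mem_insert_iff, Set.mem_singleton_iff] at hr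
    rcases hr with rfl | rfl | rfl | rfl | rfl
    · simp only [map_pow, FreeGroup.lift_apply_of, f0, HW.pa2]
    · simp only [map_pow, FreeGroup.lift_apply_of, f1, HW.pb3]
    · simp only [map_pow, FreeGroup.lift_apply_of, f2, HW.pc7]
    · simp only [map_mul, FreeGroup.lift_apply_of, f0, f1, f2, HW.pb]
      group
    · simp only [map_mul, map_pow, FreeGroup.lift_apply_of, f1, f2, HW.pS4]
  have hge := HW.lower (PresentedGroup.toGroup hrel) a c (PresentedGroup.toGroup.of hrel)
    (PresentedGroup.toGroup.of hrel)
  omega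
end
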